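/- Assume the Gaussian-basis model: fix v ∈ ℝ^N, let Y ∈ ℝ^{N×n} have first column v and remaining n−1 columns i.i.d. N(0, (1/N) I_N), let Q ∈ ℝ^{n×n} be an arbitrary orthogonal matrix, and observe Ỹ = YQ. Let ỹ_iᵀ be the i-th row of Ỹ, define M̃ := Σ_{i=1}^N (‖ỹ_i‖² − (n−1)/N) ỹ_i ỹ_iᵀ − (3/N) I_n, and let ũ be the unit leading eigenvector of M̃ (the eigenvector whose eigenvalue has largest magnitude). There exists a universal constant C > 0 such that for any δ ∈ (0,1) with N ≥ log⁷(N/δ): defining η as in the spectral-norm proposition, with probability at least 1−δ there is a choice of sign s ∈ {±1} with ‖s·Ỹũ − v‖ ≤ C·η·(‖v‖+1)/|‖v‖₄⁴ − 3/N|. -/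

import Mathlib

open MeasureTheory ProbabilityTheory Matrix

/-- Euclidean norm of a vector in `ℝ^k`. -/
noncomputable def eucNorm {k : ℕ} (v : Fin k → ℝ) : ℝ := Real.sqrt (∑ i, (v i) ^ 2)

/-- ℓ_p norm of a vector in `ℝ^k`. -/
noncomputable def lpNorm {k : ℕ} (p : ℝ) (v : Fin k → ℝ) : ℝ := (∑ i, |v i| ^ p) ^ (1 / p)

/-- Supremum (ℓ_∞) norm of a vector in `ℝ^k`. -/
noncomputable def supNorm {k : ℕ} (v : Fin k → ℝ) : ℝ := ⨆ i, |v i|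

/-- The Gaussian measure `N(0, σ2 · I_k)` on `ℝ^k`. -/
noncomputable def gaussVec (k : ℕ) (σ2 : NNReal) : Measure (Fin k → ℝ) :=
  Measure.pi fun _ => gaussianReal 0 σ2

instance (k : ℕ) (σ2 : NNReal) : IsProbabilityMeasure (gaussVec k σ2) := by
  unfold gaussVec; infer_instance

/-- The law of `N` i.i.d. samples from `N(0, σ2 · I_k)`. -/
noncomputable def iidGaussVec (N k : ℕ) (σ2 : NNReal) : Measure (Fin N → Fin k → ℝ) :=
  Measure.pi fun _ => gaussVec k σ2

/-- Concatenation `(a, bᵀ)ᵀ ∈ ℝ^n` of a scalar `a` with a vector `b ∈ ℝ^{n-1}`. -/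
noncomputable def rowCat {n : ℕ} (a : ℝ) (b : Fin (n - 1) → ℝ) : Fin n → ℝ :=
  fun j => if h : (j : ℕ) = 0 then a else b ⟨(j : ℕ) - 1, by have := j.isLt; omega⟩

/-- The `N × n` matrix whose rows are `y_iᵀ = (v_i, b_iᵀ)`, i.e. whose first column is `v`
and whose remaining `n - 1` columns are given by `B`. -/
noncomputable def gaussBasis {N n : ℕ} (v : Fin N → ℝ) (B : Fin N → Fin (n - 1) → ℝ) :
    Matrix (Fin N) (Fin n) ℝ :=
  Matrix.of fun i => rowCat (v i) (B i)

/-- The matrix `M(Y) = ∑_i (‖y_i‖² - (n-1)/N) y_i y_iᵀ - (3/N) I_n` built from the rows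
`y_iᵀ` of `Y`. -/
noncomputable def specMat {N n : ℕ} (Y : Matrix (Fin N) (Fin n) ℝ) :
    Matrix (Fin n) (Fin n) ℝ :=
  (∑ i, ((∑ j, (Y i j) ^ 2) - ((n : ℝ) - 1) / N) • Matrix.vecMulVec (Y i) (Y i))
    - ((3 : ℝ) / N) • (1 : Matrix (Fin n) (Fin n) ℝ)

/-- `u` is a unit leading eigenvector of the (symmetric) matrix `M`: a unit eigenvector
whose eigenvalue has the largest absolute value among all eigenvalues of `M`. -/
def IsLeadingEigen {n : ℕ} (M : Matrix (Fin n) (Fin n) ℝ) (u : Fin n → ℝ) : Prop :=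
  eucNorm u = 1 ∧ ∃ μ : ℝ, M.mulVec u = μ • u ∧
    ∀ μ' : ℝ, (∃ w : Fin n → ℝ, w ≠ 0 ∧ M.mulVec w = μ' • w) → |μ'| ≤ |μ|

/-- The quantity `η = η(N, n, v, δ)` with universal constant `C`. -/
noncomputable def etaBound (C : ℝ) (N n : ℕ) (v : Fin N → ℝ) (δ : ℝ) : ℝ :=
  C * ((eucNorm v + 1) * n * Real.sqrt (Real.log (N / δ)) / (N : ℝ) ^ ((3 : ℝ) / 2)
    + lpNorm 4 v ^ 2 * Real.sqrt (n * Real.log (N / δ)) / N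
    + lpNorm 6 v ^ 3 * (Real.sqrt n + Real.sqrt (Real.log (N / δ))) / Real.sqrt N
    + supNorm v ^ 2 * (n * Real.log (N / δ) + (Real.log (N / δ)) ^ 2) / N
    + (n * Real.log (N / δ)) ^ ((3 : ℝ) / 2) / (N : ℝ) ^ 2
    + |eucNorm v ^ 2 - 1| / N)

theorem exists_half_net (n : ℕ) :
    ∃ s : Finset (Fin n → ℝ), s.card ≤ 5 ^ n ∧ (∀ w ∈ s, w ⬝ᵥ w = 1) ∧
      ∀ w : Fin n → ℝ, w ⬝ᵥ w = 1 → ∃ c ∈ s, (w - c) ⬝ᵥ (w - c) ≤ 1 / 4 := by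
  classical
  have norm_sq : ∀ w : Fin n → ℝ, ‖(WithLp.toLp 2 w : EuclideanSpace ℝ (Fin n))‖ ^ 2 = w ⬝ᵥ w := by
    intro w
    rw [EuclideanSpace.real_norm_sq_eq]
    simp [dotProduct, sq]
  let P : ℕ → Prop := fun k => ∃ s : Finset (Fin n → ℝ), s.card = k ∧ (∀ w ∈ s, w ⬝ᵥ w = 1) ∧
    ∀ c ∈ s, ∀ d ∈ s, c ≠ d → 1 / 4 ≤ (c - d) ⬝ᵥ (c - d)
  have hP : ∀ k, P k → k ≤ 5 ^ n := by
    rintro k ⟨s, rfl, h1, h2⟩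
    have := Besicovitch.card_le_of_separated
      (s.image fun w => (WithLp.toLp 2 ((2 : ℝ) • w) : EuclideanSpace ℝ (Fin n))) ?_ ?_
    · rw [Finset.card_image_of_injective] at this
      · simpa using this
      · intro a b hab
        simpa using hab
    · intro c hc
      obtain ⟨w, hw, rfl⟩ := Finset.mem_image.1 hc
      have := norm_sq ((2 : ℝ) • w)
      rw [smul_dotProduct, dotProduct_smul, h1 w hw] at this
      simp only [smul_eq_mul] at this
      nlinarith [norm_nonneg (WithLp.toLp 2 ((2 : ℝ) • w) : EuclideanSpace ℝ (Fin n))]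
    · intro c hc d hd hcd
      obtain ⟨w, hw, rfl⟩ := Finset.mem_image.1 hc
      obtain ⟨z, hz, rfl⟩ := Finset.mem_image.1 hd
      have hwz : w ≠ z := fun h => hcd (by rw [h])
      rw [← WithLp.toLp_sub, ← smul_sub]
      have h3 := norm_sq ((2 : ℝ) • (w - z))
      rw [smul_dotProduct, dotProduct_smul] at h3
      have := h2 w hw z hz hwz
      simp only [smul_eq_mul] at h3
      nlinarith [norm_nonneg (WithLp.toLp 2 ((2 : ℝ) • (w - z)) : EuclideanSpace ℝ (Fin n))]
  have h0 : P 0 := ⟨∅, by simp, by simp, by simp⟩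
  have hg : P (Nat.findGreatest P (5 ^ n)) := Nat.findGreatest_spec (Nat.zero_le _) h0
  have hm : ∀ k, P k → k ≤ Nat.findGreatest P (5 ^ n) := fun k hk =>
    Nat.le_findGreatest (hP k hk) hk
  obtain ⟨s, hs, h1, h2⟩ := hg
  refine ⟨s, hs ▸ hP _ ⟨s, hs, h1, h2⟩ , h1, ?_⟩
  intro w hw
  by_contra hcon
  push Not at hcon
  have hws : w ∉ s := fun h => by
    have := hcon w h
    simp at this
    linarith
  have := hm (s.card + 1) ⟨insert w s, Finset.card_insert_of_notMem hws, ?_, ?_⟩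
  · omega
  · intro z hz
    rcases Finset.mem_insert.1 hz with rfl | hz
    · exact hw
    · exact h1 z hz
  · intro c hc d hd hcd
    rcases Finset.mem_insert.1 hc with rfl | hc' <;>
      rcases Finset.mem_insert.1 hd with rfl | hd'
    · exact absurd rfl hcd
    · exact (hcon d hd').le
    · rw [← neg_sub, neg_dotProduct_neg]
      exact (hcon c hc').le
    · exact h2 c hc' d hd' hcd

theorem exists_dominant_eigenvector {n : ℕ} [NeZero n] (A : Matrix (Fin n) (Fin n) ℝ)
    (hA : Aᵀ = A) :
    ∃ (μ : ℝ) (u : Fin n → ℝ), u ⬝ᵥ u = 1 ∧ A.mulVec u = μ • u ∧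
      ∀ w : Fin n → ℝ, |w ⬝ᵥ A.mulVec w| ≤ |μ| * (w ⬝ᵥ w) := by
  have hH : A.IsHermitian := by
    rw [Matrix.IsHermitian, Matrix.conjTranspose_eq_transpose_of_trivial, hA]
  obtain ⟨j, -, hj⟩ := Finset.exists_max_image (Finset.univ : Finset (Fin n))
    (fun j => |hH.eigenvalues j|) Finset.univ_nonempty
  set b := hH.eigenvectorBasis
  refine ⟨hH.eigenvalues j, (b j).ofLp, ?_, ?_, ?_⟩
  · have := b.orthonormal.1 j
    have h2 := EuclideanSpace.real_norm_sq_eq (b j)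
    rw [this] at h2
    simp only [dotProduct, ← sq]
    rw [← h2]; norm_num
  · exact hH.mulVec_eigenvectorBasis j
  · intro w
    set W : EuclideanSpace ℝ (Fin n) := WithLp.toLp 2 w
    have inner_eq : ∀ x y : EuclideanSpace ℝ (Fin n), inner ℝ x y = x.ofLp ⬝ᵥ y.ofLp := by
      intro x y
      simp [EuclideanSpace.inner_eq_star_dotProduct, dotProduct_comm]
    have hww : w ⬝ᵥ w = ∑ i, (inner ℝ (b i) W) ^ 2 := by
      have := b.sum_inner_mul_inner W W
      rw [inner_eq W W] at this
      rw [← this]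
      exact Finset.sum_congr rfl fun i _ => by rw [real_inner_comm, sq]
    have hwA : w ⬝ᵥ A.mulVec w = ∑ i, hH.eigenvalues i * (inner ℝ (b i) W) ^ 2 := by
      have := b.sum_inner_mul_inner W (WithLp.toLp 2 (A.mulVec w))
      rw [inner_eq W _] at this
      rw [← this]
      refine Finset.sum_congr rfl fun i _ => ?_
      have h3 : inner ℝ (b i) (WithLp.toLp 2 (A.mulVec w)) =
          hH.eigenvalues i * inner ℝ (b i) W := by
        rw [inner_eq, inner_eq]
        simp only
        rw [dotProduct_mulVec, ← mulVec_transpose, hA, hH.mulVec_eigenvectorBasis i,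
          smul_dotProduct, smul_eq_mul]
      rw [h3, real_inner_comm]; ring
    rw [hwA, hww, Finset.mul_sum]
    refine (Finset.abs_sum_le_sum_abs _ _).trans (Finset.sum_le_sum fun i _ => ?_)
    rw [abs_mul, abs_of_nonneg (sq_nonneg (inner ℝ (b i) W))]
    exact mul_le_mul_of_nonneg_right (hj i (Finset.mem_univ i)) (sq_nonneg _)

theorem quadForm_le_of_net {n : ℕ} [NeZero n] (A : Matrix (Fin n) (Fin n) ℝ)
    (hA : Aᵀ = A) (s : Finset (Fin n → ℝ)) (hs : ∀ w ∈ s, w ⬝ᵥ w = 1)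
    (hnet : ∀ w : Fin n → ℝ, w ⬝ᵥ w = 1 → ∃ c ∈ s, (w - c) ⬝ᵥ (w - c) ≤ 1 / 4) (ε : ℝ)
    (hε : ∀ w ∈ s, |w ⬝ᵥ A.mulVec w| ≤ ε) (w : Fin n → ℝ) :
    |w ⬝ᵥ A.mulVec w| ≤ 2 * ε * (w ⬝ᵥ w) := by
  obtain ⟨μ, u, hu, hAu, hmax⟩ := exists_dominant_eigenvector A hA
  refine (hmax w).trans ?_
  have hw0 : 0 ≤ w ⬝ᵥ w := by
    simpa [dotProduct, ← sq] using Finset.sum_nonneg fun i _ => sq_nonneg (w i)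
  refine mul_le_mul_of_nonneg_right ?_ hw0
  obtain ⟨c, hc, hd⟩ := hnet u hu
  obtain ⟨d, hd_def⟩ : ∃ d, d = u - c := ⟨_, rfl⟩
  rw [← hd_def] at hd
  have hcu : c = u - d := by simp [hd_def]
  have hc1 := hs c hc
  have hud : 2 * (u ⬝ᵥ d) = d ⬝ᵥ d := by
    rw [hcu, sub_dotProduct, dotProduct_sub, dotProduct_sub, hu, dotProduct_comm d u] at hc1
    linarith
  have hdu : d ⬝ᵥ A.mulVec u = μ * (u ⬝ᵥ d) := by
    rw [hAu, dotProduct_smul, smul_eq_mul, dotProduct_comm]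
  have hud' : u ⬝ᵥ A.mulVec d = μ * (u ⬝ᵥ d) := by
    rw [dotProduct_mulVec, ← mulVec_transpose, hA, hAu, smul_dotProduct, smul_eq_mul]
  have hcA : c ⬝ᵥ A.mulVec c = μ * (1 - d ⬝ᵥ d) + d ⬝ᵥ A.mulVec d := by
    rw [hcu, mulVec_sub, sub_dotProduct, dotProduct_sub, dotProduct_sub, hdu, hud', hAu,
      dotProduct_smul, hu, smul_eq_mul, ← hud]
    ring
  have h1 := hε c hc
  rw [hcA] at h1
  have h2 := hmax d
  have h3 : |μ * (1 - d ⬝ᵥ d)| = |μ| * (1 - d ⬝ᵥ d) := by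
    rw [abs_mul, abs_of_nonneg (a := 1 - d ⬝ᵥ d) (by linarith)]
  have h4 : |μ * (1 - d ⬝ᵥ d)| ≤ |μ * (1 - d ⬝ᵥ d) + d ⬝ᵥ A.mulVec d| + |d ⬝ᵥ A.mulVec d| := by
    have := abs_sub (μ * (1 - d ⬝ᵥ d) + d ⬝ᵥ A.mulVec d) (d ⬝ᵥ A.mulVec d)
    simpa using this
  nlinarith [abs_nonneg μ]

/-- Davis-Kahan type bound for a perturbation of a rank-one matrix `lam • e eᵀ`. -/
theorem leading_eigenvector_perturbation {n : ℕ} [NeZero n] (M : Matrix (Fin n) (Fin n) ℝ)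
    (hM : Mᵀ = M) (e : Fin n → ℝ) (he : e ⬝ᵥ e = 1) (lam ε : ℝ)
    (hE : ∀ w : Fin n → ℝ, |w ⬝ᵥ M.mulVec w - lam * (e ⬝ᵥ w) ^ 2| ≤ ε * (w ⬝ᵥ w))
    (u : Fin n → ℝ) (hu : IsLeadingEigen M u) :
    ∃ s : ℝ, (s = 1 ∨ s = -1) ∧ |lam| * eucNorm (s • u - e) ≤ 8 * ε := by
  obtain ⟨hu1, μ, hμ, hlead⟩ := hu
  have eucsq : ∀ w : Fin n → ℝ, eucNorm w ^ 2 = w ⬝ᵥ w := by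
    intro w
    rw [eucNorm, Real.sq_sqrt (Finset.sum_nonneg fun i _ => sq_nonneg _)]
    simp [dotProduct, sq]
  have euc0 : ∀ w : Fin n → ℝ, 0 ≤ eucNorm w := fun w => Real.sqrt_nonneg _
  have huu : u ⬝ᵥ u = 1 := by rw [← eucsq, hu1]; norm_num
  have hε0 : 0 ≤ ε := by
    have := hE u
    rw [huu, mul_one] at this
    exact (abs_nonneg _).trans this
  -- the leading eigenvalue is at least `|lam| - ε`
  have hμlam : |lam| - ε ≤ |μ| := by
    obtain ⟨ν, z, hz, hAz, hmax⟩ := exists_dominant_eigenvector M hM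
    have h1 := hmax e
    have h2 := hE e
    rw [he] at h1 h2
    have h3 : |ν| ≤ |μ| := hlead ν ⟨z, fun h => by simp [h] at hz, hAz⟩
    have h4 : |lam| ≤ |e ⬝ᵥ M.mulVec e| + |e ⬝ᵥ M.mulVec e - lam * 1 ^ 2| := by
      have := abs_sub (e ⬝ᵥ M.mulVec e) (e ⬝ᵥ M.mulVec e - lam * 1 ^ 2)
      simpa using this
    linarith
  set a := e ⬝ᵥ u with ha
  set s : ℝ := if 0 ≤ a then 1 else -1 with hs
  have hs1 : s = 1 ∨ s = -1 := by
    by_cases h : 0 ≤ a <;> simp [hs, h]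
  have hss : s * s = 1 := by rcases hs1 with h | h <;> rw [h] <;> norm_num
  have hsa : s * a = |a| := by
    by_cases h : 0 ≤ a
    · simp [hs, h, abs_of_nonneg h]
    · simp [hs, h, abs_of_neg (not_le.1 h)]
  have hdist : eucNorm (s • u - e) ^ 2 = 2 - 2 * |a| := by
    rw [eucsq, sub_dotProduct, dotProduct_sub, dotProduct_sub, he, smul_dotProduct,
      dotProduct_smul, smul_dotProduct, dotProduct_smul, huu, dotProduct_comm u e, ← ha]
    simp only [smul_eq_mul]
    rw [hsa]
    linarith
  set p := u - a • e with hp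
  have hep : e ⬝ᵥ p = 0 := by
    rw [hp, dotProduct_sub, dotProduct_smul, he, ← ha]; simp
  have hpp : p ⬝ᵥ p = 1 - a ^ 2 := by
    have : p ⬝ᵥ p = p ⬝ᵥ u - a * (e ⬝ᵥ p) := by
      conv_lhs => rw [hp]
      rw [← hp, dotProduct_sub, dotProduct_smul, smul_eq_mul, dotProduct_comm e p]
    rw [this, hep, hp, sub_dotProduct, huu, smul_dotProduct, ← ha, smul_eq_mul]
    ring
  have hpu : p ⬝ᵥ u = p ⬝ᵥ p := by
    have : u = p + a • e := by simp [hp]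
    conv_lhs => rw [this]
    rw [dotProduct_add, dotProduct_smul, dotProduct_comm p e, hep]; simp
  have hpMu : p ⬝ᵥ M.mulVec u = μ * (p ⬝ᵥ p) := by
    rw [hμ, dotProduct_smul, smul_eq_mul, hpu]
  have ha1 : a ^ 2 ≤ 1 := by
    have : 0 ≤ p ⬝ᵥ p := by rw [← eucsq]; positivity
    linarith
  have haabs : |a| ≤ 1 := by
    rw [← sq_abs] at ha1
    nlinarith [abs_nonneg a]
  -- polarization of the quadratic-form bound
  have hpol : ∀ t : ℝ, 0 < t → |p ⬝ᵥ M.mulVec u| ≤ ε * (t * (p ⬝ᵥ p) + t⁻¹) := by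
    intro t ht
    have hsym : u ⬝ᵥ M.mulVec p = p ⬝ᵥ M.mulVec u := by
      rw [dotProduct_mulVec, ← mulVec_transpose, hM, dotProduct_comm]
    have h1 := hE (t • p + u)
    have h2 := hE (t • p - u)
    simp only [mulVec_add, mulVec_sub, mulVec_smul, dotProduct_add, add_dotProduct, dotProduct_sub,
      sub_dotProduct, smul_dotProduct, dotProduct_smul, smul_eq_mul, hep, hsym, huu,
      dotProduct_comm u p, hpu, ← ha] at h1 h2
    rw [abs_le] at h1 h2
    have key : |p ⬝ᵥ M.mulVec u| * t ≤ ε * (t ^ 2 * (p ⬝ᵥ p) + 1) := by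
      rcases abs_cases (p ⬝ᵥ M.mulVec u) with ⟨h, _⟩ | ⟨h, _⟩ <;> rw [h] <;> nlinarith
    have : |p ⬝ᵥ M.mulVec u| ≤ ε * (t ^ 2 * (p ⬝ᵥ p) + 1) / t := by
      rwa [le_div_iff₀ ht]
    refine this.trans (le_of_eq ?_)
    field_simp
  refine ⟨s, hs1, ?_⟩
  by_cases hcase : |lam| ≤ 2 * ε
  · have : eucNorm (s • u - e) ≤ 2 := by
      nlinarith [euc0 (s • u - e), abs_nonneg a]
    nlinarith [abs_nonneg lam, euc0 (s • u - e)]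
  · push Not at hcase
    set q := eucNorm p with hq
    have hq2 : q ^ 2 = p ⬝ᵥ p := eucsq p
    have hq0 : 0 ≤ q := euc0 p
    have hbound : |lam| * q ≤ 4 * ε := by
      by_cases hq' : q = 0
      · rw [hq']; simp; exact hε0
      · have hqpos : 0 < q := lt_of_le_of_ne hq0 (Ne.symm hq')
        have h1 := hpol q⁻¹ (inv_pos.2 hqpos)
        rw [hpMu, ← hq2, inv_inv, abs_mul, abs_of_nonneg (sq_nonneg q)] at h1
        have h2 : q⁻¹ * q ^ 2 + q = 2 * q := by field_simp; norm_num
        rw [h2] at h1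
        have h3 : |μ| * q ≤ 2 * ε := by
          by_contra hc
          push Not at hc
          nlinarith
        nlinarith
    have h5 : eucNorm (s • u - e) ≤ 2 * q := by
      refine abs_le_of_sq_le_sq' ?_ (by positivity) |>.2
      rw [hdist, mul_pow, hq2, hpp, ← sq_abs a]
      nlinarith [abs_nonneg a]
    nlinarith [abs_nonneg lam]

/-- `Z` has mean proxy `m` and a sub-gamma moment generating function with variance proxy `τ` and
scale `ρ`. -/
def IsSubGamma {Ω : Type*} [MeasurableSpace Ω] (μ : Measure Ω) (Z : Ω → ℝ) (m τ ρ : ℝ) : Prop :=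
  ∀ s : ℝ, |s| * ρ ≤ 1 → Integrable (fun ω => Real.exp (s * Z ω)) μ ∧
    ∫ ω, Real.exp (s * Z ω) ∂μ ≤ Real.exp (s * m + s ^ 2 * τ)

theorem IsSubGamma.tail {Ω : Type*} [MeasurableSpace Ω] {μ : Measure Ω} [IsFiniteMeasure μ]
    {X : Ω → ℝ} {V R T : ℝ} (h : IsSubGamma μ X 0 V R) (hV : 0 ≤ V) (hR : 0 < R) (hT : 0 < T) :
    μ.real {ω | 2 * (√(V * T) + R * T) < |X ω|} ≤ 2 * Real.exp (-T) := by
  set D := √V / √T + R with hD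
  have hD0 : 0 < D := by positivity
  have hDR : R ≤ D := by simp only [hD]; linarith [show 0 ≤ √V / √T by positivity]
  set t := 2 * (√(V * T) + R * T) with ht
  have htD : D⁻¹ * t = 2 * T := by
    have : t = 2 * T * D := by
      rw [ht, hD, Real.sqrt_mul hV]
      have := Real.mul_self_sqrt hT.le
      have hTpos := Real.sqrt_pos.2 hT
      field_simp
      linear_combination √V * this
    rw [this]; field_simp
  have hV2 : (D⁻¹) ^ 2 * V ≤ T := by
    have h1 : √V ≤ D * √T := by
      rw [hD, add_mul, div_mul_cancel₀ _ (Real.sqrt_pos.2 hT).ne']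
      nlinarith [Real.sqrt_nonneg T]
    have h2 : V ≤ D ^ 2 * T := by
      have := mul_self_le_mul_self (Real.sqrt_nonneg V) h1
      rw [Real.mul_self_sqrt hV] at this
      nlinarith [Real.mul_self_sqrt hT.le]
    rw [inv_pow, inv_mul_le_iff₀ (by positivity)]
    exact h2
  have key : ∀ Y : Ω → ℝ, Integrable (fun ω => Real.exp (D⁻¹ * Y ω)) μ →
      ∫ ω, Real.exp (D⁻¹ * Y ω) ∂μ ≤ Real.exp T → μ.real {ω | t ≤ Y ω} ≤ Real.exp (-T) := by
    intro Y hY1 hY2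
    refine (measure_ge_le_exp_mul_mgf t (inv_nonneg.2 hD0.le) hY1).trans ?_
    rw [mgf, neg_mul, htD]
    calc Real.exp (-(2 * T)) * ∫ ω, Real.exp (D⁻¹ * Y ω) ∂μ
        ≤ Real.exp (-(2 * T)) * Real.exp T := by gcongr
      _ = Real.exp (-T) := by rw [← Real.exp_add]; ring_nf
  have habs : |D⁻¹| * R ≤ 1 := by
    rw [abs_of_pos (inv_pos.2 hD0), inv_mul_le_iff₀ hD0]; linarith
  have e1 := h D⁻¹ habs
  have e2 := h (-D⁻¹) (by rwa [abs_neg])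
  have k1 := key X e1.1 (e1.2.trans (Real.exp_le_exp.2 (by linarith)))
  have k2 := key (fun ω => -X ω) (by simpa using e2.1)
    (by simpa using e2.2.trans (Real.exp_le_exp.2 (by rw [neg_sq]; linarith)))
  calc μ.real {ω | t < |X ω|} ≤ μ.real ({ω | t ≤ X ω} ∪ {ω | t ≤ -X ω}) := by
        refine measureReal_mono ?_
        intro ω hω
        have hω' : t < |X ω| := hω
        rcases le_abs.1 hω'.le with h | h
        · exact Or.inl h
        · exact Or.inr h
    _ ≤ μ.real {ω | t ≤ X ω} + μ.real {ω | t ≤ -X ω} := measureReal_union_le _ _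
    _ ≤ 2 * Real.exp (-T) := by linarith

theorem IsSubGamma.weighted_sum {Ω : Type*} [MeasurableSpace Ω] {μ : Measure Ω}
    [IsProbabilityMeasure μ] {Z : Ω → ℝ} {m τ ρ : ℝ} (h : IsSubGamma μ Z m τ ρ) (hρ : 0 ≤ ρ)
    {N : ℕ} (c : Fin N → ℝ) {κ R : ℝ} (hc : ∀ i, |c i| ≤ κ) (hR : κ * ρ ≤ R) :
    IsSubGamma (Measure.pi fun _ : Fin N => μ) (fun ω => ∑ i, c i * (Z (ω i) - m)) 0
      (τ * ∑ i, c i ^ 2) R := by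
  intro s hs
  have hi : ∀ i, |s * c i| * ρ ≤ 1 := by
    intro i
    rw [abs_mul]
    have h1 := mul_le_mul_of_nonneg_right (hc i) hρ
    have h2 := mul_le_mul_of_nonneg_left (h1.trans hR) (abs_nonneg s)
    nlinarith
  have hexp : ∀ ω : Fin N → Ω, Real.exp (s * ∑ i, c i * (Z (ω i) - m)) =
      ∏ i, Real.exp (-(s * c i * m)) * Real.exp (s * c i * Z (ω i)) := by
    intro ω
    rw [Finset.mul_sum, Real.exp_sum]
    refine Finset.prod_congr rfl fun i _ => ?_
    rw [← Real.exp_add]; ring_nf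
  simp only [hexp]
  constructor
  · exact Integrable.fintype_prod (f := fun i y => Real.exp (-(s * c i * m)) *
      Real.exp (s * c i * Z y)) fun i => ((h _ (hi i)).1).const_mul _
  · rw [integral_fintype_prod_eq_prod (fun i y => Real.exp (-(s * c i * m)) *
      Real.exp (s * c i * Z y))]
    have : Real.exp (s * 0 + s ^ 2 * (τ * ∑ i, c i ^ 2)) =
        ∏ i, Real.exp (s ^ 2 * (τ * c i ^ 2)) := by
      rw [← Real.exp_sum, ← Finset.mul_sum, ← Finset.mul_sum]; simp
    rw [this]
    refine Finset.prod_le_prod (fun _ _ => integral_nonneg fun y => by positivity) fun i _ => ?_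
    rw [integral_const_mul]
    calc _ ≤ Real.exp (-(s * c i * m)) * Real.exp (s * c i * m + (s * c i) ^ 2 * τ) := by
          gcongr; exact (h _ (hi i)).2
      _ = _ := by rw [← Real.exp_add]; ring_nf

theorem IsSubGamma.weighted_sum_tail {Ω : Type*} [MeasurableSpace Ω] {μ : Measure Ω}
    [IsProbabilityMeasure μ] {Z : Ω → ℝ} {m τ ρ : ℝ} (h : IsSubGamma μ Z m τ ρ) (hρ : 0 ≤ ρ)
    (hτ : 0 ≤ τ) {N : ℕ} (c : Fin N → ℝ) {κ R T : ℝ} (hc : ∀ i, |c i| ≤ κ) (hR : κ * ρ ≤ R)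
    (hR0 : 0 < R) (hT : 0 < T) :
    (Measure.pi fun _ : Fin N => μ).real
      {ω | 2 * (√(τ * (∑ i, c i ^ 2) * T) + R * T) < |∑ i, c i * (Z (ω i) - m)|} ≤
      2 * Real.exp (-T) :=
  (h.weighted_sum hρ c hc hR).tail (mul_nonneg hτ (Finset.sum_nonneg fun _ _ => sq_nonneg _)) hR0 hT

theorem Real.exp_le_one_add_add_sq_mul_exp_abs (y : ℝ) :
    Real.exp y ≤ 1 + y + y ^ 2 * Real.exp |y| := by
  have h := Complex.norm_exp_sub_sum_le_norm_mul_exp (y : ℂ) 2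
  have h2 : Complex.exp y - ∑ m ∈ Finset.range 2, (y : ℂ) ^ m / (m.factorial : ℂ) =
      ((Real.exp y - (1 + y) : ℝ) : ℂ) := by
    simp [Finset.sum_range_succ]
  rw [h2, Complex.norm_real, Complex.norm_real, Real.norm_eq_abs, Real.norm_eq_abs, sq_abs] at h
  linarith [le_abs_self (Real.exp y - (1 + y))]

theorem IsSubGamma.of_moment {Ω : Type*} [MeasurableSpace Ω] {μ : Measure Ω}
    [IsProbabilityMeasure μ] {Z W : Ω → ℝ} {τ ρ : ℝ} (hZ : Measurable Z) (hW : Integrable W μ)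
    (hτ : ∫ ω, W ω ∂μ ≤ τ)
    (h : ∀ s : ℝ, |s| * ρ ≤ 1 → ∀ ω, Z ω ^ 2 * Real.exp |s * Z ω| ≤ W ω) :
    IsSubGamma μ Z (∫ ω, Z ω ∂μ) τ ρ := by
  have hZi : Integrable Z μ := by
    refine Integrable.mono' ((integrable_const (1 : ℝ)).add hW) hZ.aestronglyMeasurable ?_
    refine Filter.Eventually.of_forall fun ω => ?_
    have := h 0 (by simp) ω
    simp only [zero_mul, abs_zero, Real.exp_zero, mul_one] at this
    simp only [Real.norm_eq_abs, Pi.add_apply]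
    rw [← sq_abs] at this
    nlinarith [sq_nonneg (|Z ω| - 1)]
  intro s hs
  have hpt : ∀ ω, Real.exp (s * Z ω) ≤ 1 + s * Z ω + s ^ 2 * W ω := by
    intro ω
    have h1 := Real.exp_le_one_add_add_sq_mul_exp_abs (s * Z ω)
    have h2 := mul_le_mul_of_nonneg_left (h s hs ω) (sq_nonneg s)
    nlinarith
  have hdom : Integrable (fun ω => 1 + s * Z ω + s ^ 2 * W ω) μ :=
    ((integrable_const (1 : ℝ)).add (hZi.const_mul s)).add (hW.const_mul (s ^ 2))
  have hinteg : Integrable (fun ω => Real.exp (s * Z ω)) μ := by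
    refine hdom.mono' (by fun_prop) (Filter.Eventually.of_forall fun ω => ?_)
    rw [Real.norm_eq_abs, abs_of_pos (Real.exp_pos _)]
    exact hpt ω
  refine ⟨hinteg, ?_⟩
  have h1 := integral_mono hinteg hdom hpt
  have h0 : Integrable (fun ω => 1 + s * Z ω) μ := (integrable_const (1 : ℝ)).add (hZi.const_mul s)
  rw [integral_add h0 (hW.const_mul (s ^ 2)),
    integral_add (integrable_const (1 : ℝ)) (hZi.const_mul s), integral_const_mul,
    integral_const_mul] at h1
  simp only [integral_const, probReal_univ, smul_eq_mul, mul_one] at h1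
  have h2 := mul_le_mul_of_nonneg_left hτ (sq_nonneg s)
  have h3 := Real.add_one_le_exp (s * ∫ ω, Z ω ∂μ + s ^ 2 * τ)
  linarith

theorem integrable_pow_gaussianReal (r : NNReal) (k : ℕ) :
    Integrable (fun y : ℝ => y ^ k) (gaussianReal 0 r) := by
  have h := (memLp_id_gaussianReal (μ := 0) (v := r) k).integrable_norm_pow'
  refine h.mono (by fun_prop) (Filter.Eventually.of_forall fun y => ?_)
  simp

theorem iteratedDeriv_four_exp_mul_sq (v : ℝ) :
    iteratedDeriv 4 (fun t : ℝ => Real.exp (v * t ^ 2 / 2)) 0 = 3 * v ^ 2 := by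
  have hE : ∀ t, HasDerivAt (fun t : ℝ => Real.exp (v * t ^ 2 / 2))
      (v * t * Real.exp (v * t ^ 2 / 2)) t := by
    intro t
    have : HasDerivAt (fun t : ℝ => v * t ^ 2 / 2) (v * (2 * t) / 2) t := by
      have := ((hasDerivAt_pow 2 t).const_mul v).div_const 2
      simpa using this
    convert this.exp using 1
    ring
  have hp : ∀ p : Polynomial ℝ, deriv (fun t : ℝ => p.eval t * Real.exp (v * t ^ 2 / 2)) =
      fun t => (Polynomial.derivative p + Polynomial.C v * Polynomial.X * p).eval t *
        Real.exp (v * t ^ 2 / 2) := by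
    intro p
    ext t
    rw [((p.hasDerivAt t).fun_mul (hE t)).deriv]
    simp
    ring
  have h0 : (fun t : ℝ => Real.exp (v * t ^ 2 / 2)) =
      fun t => (1 : Polynomial ℝ).eval t * Real.exp (v * t ^ 2 / 2) := by simp
  rw [h0]
  simp only [iteratedDeriv_succ, iteratedDeriv_zero, hp]
  simp [Polynomial.derivative_mul]
  ring

theorem integral_sq_gaussianReal (r : NNReal) : ∫ y : ℝ, y ^ 2 ∂gaussianReal 0 r = r := by
  have h := variance_fun_id_gaussianReal (μ := 0) (v := r)
  rw [variance_eq_integral (by fun_prop)] at h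
  simpa [integral_id_gaussianReal] using h

theorem integral_pow_four_gaussianReal (r : NNReal) :
    ∫ y : ℝ, y ^ 4 ∂gaussianReal 0 r = 3 * (r : ℝ) ^ 2 := by
  have h := iteratedDeriv_mgf_zero (X := id) (μ := gaussianReal 0 r)
    (by rw [integrableExpSet_id_gaussianReal]; simp) 4
  rw [mgf_id_gaussianReal] at h
  simp only [zero_mul, zero_add] at h
  rw [iteratedDeriv_four_exp_mul_sq] at h
  simpa using h.symm

theorem integral_exp_mul_sq_gaussianReal {r : NNReal} (hr : r ≠ 0) {s : ℝ} (hs : 2 * s * r < 1) :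
    Integrable (fun y : ℝ => Real.exp (s * y ^ 2)) (gaussianReal 0 r) ∧
      ∫ y : ℝ, Real.exp (s * y ^ 2) ∂gaussianReal 0 r = 1 / √(1 - 2 * s * r) := by
  have hr0 : (0 : ℝ) < r := by positivity
  set b : ℝ := 1 / (2 * r) - s with hb
  have hb0 : 0 < b := by
    rw [hb, sub_pos, lt_div_iff₀ (by positivity)]
    linarith
  have hpdf : ∀ y : ℝ, gaussianPDFReal 0 r y * Real.exp (s * y ^ 2) =
      (√(2 * Real.pi * r))⁻¹ * Real.exp (-b * y ^ 2) := by
    intro y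
    rw [gaussianPDFReal, mul_assoc, ← Real.exp_add, hb]
    congr 2
    field_simp
    ring
  have hb1 : b = (1 - 2 * s * r) / (2 * r) := by
    rw [hb]
    field_simp
  constructor
  · rw [gaussianReal_of_var_ne_zero 0 hr]
    rw [integrable_withDensity_iff_integrable_smul' (measurable_gaussianPDF 0 r)
      (Filter.Eventually.of_forall fun _ => gaussianPDF_lt_top)]
    simp only [toReal_gaussianPDF, smul_eq_mul, hpdf]
    exact (integrable_exp_neg_mul_sq hb0).const_mul _
  · rw [integral_gaussianReal_eq_integral_smul hr]
    simp only [smul_eq_mul, hpdf]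
    rw [integral_const_mul, integral_gaussian, ← Real.sqrt_inv, ← Real.sqrt_mul (by positivity),
      one_div, ← Real.sqrt_inv]
    congr 1
    rw [hb1]
    have := Real.pi_pos
    have h1 : 1 - 2 * s * r ≠ 0 := by linarith
    field_simp

theorem one_div_sqrt_one_sub_le {t : ℝ} (ht : |t| ≤ 1 / 2) :
    1 / √(1 - t) ≤ Real.exp (t / 2 + t ^ 2 / 2) := by
  obtain ⟨h1, h2⟩ := abs_le.1 ht
  have key : 1 ≤ Real.exp (t + t ^ 2) * (1 - t) := by
    rcases le_total 0 t with h | h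
    · have := Real.quadratic_le_exp_of_nonneg (x := t + t ^ 2) (by positivity)
      have h3 : (1 : ℝ) ≤ (1 + (t + t ^ 2) + (t + t ^ 2) ^ 2 / 2) * (1 - t) := by
        have : 0 ≤ t ^ 2 * (1 - t - t ^ 2 - t ^ 3) := by
          apply mul_nonneg (by positivity)
          nlinarith [mul_nonneg h h, mul_nonneg (mul_nonneg h h) h, mul_nonneg h (sub_nonneg.2 h2)]
        nlinarith
      exact h3.trans (mul_le_mul_of_nonneg_right this (by linarith))
    · have := Real.add_one_le_exp (t + t ^ 2)
      have h3 : (1 : ℝ) ≤ (t + t ^ 2 + 1) * (1 - t) := by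
        nlinarith [mul_nonneg (sq_nonneg t) (neg_nonneg.2 h)]
      exact h3.trans (mul_le_mul_of_nonneg_right this (by linarith))
  rw [div_le_iff₀ (Real.sqrt_pos.2 (by linarith))]
  have h4 : Real.exp (t / 2 + t ^ 2 / 2) = √(Real.exp (t + t ^ 2)) := by
    rw [Real.sqrt_eq_rpow, ← Real.exp_mul]
    ring_nf
  rw [h4, ← Real.sqrt_mul (Real.exp_pos _).le]
  exact Real.one_le_sqrt.2 key

theorem isSubGamma_sq_gaussianReal (r : NNReal) :
    IsSubGamma (gaussianReal 0 r) (fun y => y ^ 2) r (2 * (r : ℝ) ^ 2) (4 * r) := by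
  intro s hs
  rcases eq_or_ne r 0 with rfl | hr
  · simp [gaussianReal_zero_var]
    exact integrable_dirac (by simp)
  have ht : |2 * s * r| ≤ 1 / 2 := by
    rw [abs_mul, abs_mul, NNReal.abs_eq, abs_two]
    linarith
  obtain ⟨h1, h2⟩ := integral_exp_mul_sq_gaussianReal hr (s := s)
    (by linarith [(abs_le.1 ht).2])
  refine ⟨h1, h2.le.trans ((one_div_sqrt_one_sub_le ht).trans (Real.exp_le_exp.2 (le_of_eq ?_)))⟩
  ring

theorem isSubGamma_id_gaussianReal (r : NNReal) :
    IsSubGamma (gaussianReal 0 r) (fun y => y) 0 (r / 2) 0 := by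
  intro s _
  refine ⟨integrable_exp_mul_gaussianReal s, ?_⟩
  have h := congrFun (mgf_fun_id_gaussianReal (μ := 0) (v := r)) s
  rw [mgf] at h
  rw [h]
  exact Real.exp_le_exp.2 (le_of_eq (by ring))

theorem IsSubGamma.congr_fun {Ω : Type*} [MeasurableSpace Ω] {μ : Measure Ω} {Z Z' : Ω → ℝ}
    {m τ τ' ρ : ℝ} (h : IsSubGamma μ Z m τ ρ) (hZ : ∀ ω, Z ω = Z' ω) (hτ : τ ≤ τ') :
    IsSubGamma μ Z' m τ' ρ := by
  obtain rfl : Z = Z' := funext hZ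
  intro s hs
  refine ⟨(h s hs).1, (h s hs).2.trans (Real.exp_le_exp.2 ?_)⟩
  nlinarith [sq_nonneg s]

/-- The recentred squared norm `‖b‖² - m r` of a vector in `ℝ^m`. -/
noncomputable def sqDev (m : ℕ) (r : NNReal) (b : Fin m → ℝ) : ℝ := ∑ j, (b j) ^ 2 - m * r

theorem measurable_sqDev (m : ℕ) (r : NNReal) : Measurable (sqDev m r) := by
  unfold sqDev
  fun_prop

theorem isSubGamma_sqDev (m : ℕ) (r : NNReal) :
    IsSubGamma (gaussVec m r) (sqDev m r) 0 (2 * m * (r : ℝ) ^ 2) (4 * r) := by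
  have h := (isSubGamma_sq_gaussianReal r).weighted_sum (N := m) (by positivity) (fun _ => 1)
    (κ := 1) (R := 4 * r) (by simp) (by simp)
  refine h.congr_fun (fun ω => ?_) (le_of_eq ?_)
  · simp [sqDev, Finset.sum_sub_distrib]
  · simp; ring

theorem isSubGamma_dotProduct (m : ℕ) (r : NNReal) (x : Fin m → ℝ) (hx : x ⬝ᵥ x ≤ 1) :
    IsSubGamma (gaussVec m r) (fun b => b ⬝ᵥ x) 0 (r / 2) 0 := by
  have h := (isSubGamma_id_gaussianReal r).weighted_sum (N := m) le_rfl x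
    (κ := ∑ i, |x i|) (R := 0)
    (fun i => Finset.single_le_sum (f := fun i => |x i|) (fun _ _ => abs_nonneg _)
      (Finset.mem_univ i)) (by simp)
  refine h.congr_fun (fun ω => ?_) ?_
  · simp [dotProduct, mul_comm]
  · have : ∑ i, x i ^ 2 = x ⬝ᵥ x := by simp [dotProduct, sq]
    rw [this]
    nlinarith [r.coe_nonneg]

theorem gaussVec_map_dotProduct (m : ℕ) (r : NNReal) (x : Fin m → ℝ) :
    (gaussVec m r).map (fun b => b ⬝ᵥ x) = gaussianReal 0 (r * (x ⬝ᵥ x).toNNReal) := by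
  have hmeas : Measurable fun b : Fin m → ℝ => b ⬝ᵥ x := by
    unfold dotProduct
    fun_prop
  have : IsProbabilityMeasure ((gaussVec m r).map (fun b => b ⬝ᵥ x)) :=
    Measure.isProbabilityMeasure_map hmeas.aemeasurable
  apply Measure.ext_of_charFun
  ext t
  rw [charFun_gaussianReal, charFun_apply_real, integral_map hmeas.aemeasurable (by fun_prop)]
  have h1 : ∀ b : Fin m → ℝ, Complex.exp ((t : ℂ) * ((b ⬝ᵥ x : ℝ) : ℂ) * Complex.I) =
      ∏ i, Complex.exp (((t * x i : ℝ) : ℂ) * (b i : ℂ) * Complex.I) := by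
    intro b
    rw [← Complex.exp_sum, dotProduct]
    congr 1
    push_cast
    rw [Finset.mul_sum, Finset.sum_mul]
    exact Finset.sum_congr rfl fun i _ => by ring
  simp only [h1]
  rw [gaussVec, integral_fintype_prod_eq_prod
    (fun i (y : ℝ) => Complex.exp (((t * x i : ℝ) : ℂ) * (y : ℂ) * Complex.I))]
  simp only [← charFun_apply_real, charFun_gaussianReal]
  rw [← Complex.exp_sum]
  congr 1
  have hx : 0 ≤ x ⬝ᵥ x := Finset.sum_nonneg fun i _ => mul_self_nonneg _
  rw [NNReal.coe_mul, Real.coe_toNNReal _ hx, dotProduct]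
  push_cast
  simp only [mul_zero, zero_mul, zero_sub]
  rw [Finset.sum_neg_distrib, Finset.mul_sum, Finset.sum_mul, Finset.sum_div]
  congr 1
  exact Finset.sum_congr rfl fun i _ => by ring

theorem isSubGamma_dotProduct_sq (m : ℕ) (r : NNReal) (x : Fin m → ℝ) (hx : x ⬝ᵥ x ≤ 1) :
    IsSubGamma (gaussVec m r) (fun b => (b ⬝ᵥ x) ^ 2) (r * (x ⬝ᵥ x)) (2 * (r : ℝ) ^ 2) (4 * r) := by
  have hx0 : 0 ≤ x ⬝ᵥ x := Finset.sum_nonneg fun i _ => mul_self_nonneg _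
  have hr := r.coe_nonneg
  have hmeas : Measurable fun b : Fin m → ℝ => b ⬝ᵥ x := by
    unfold dotProduct
    fun_prop
  intro s hs
  have hrx : (r : ℝ) * (x ⬝ᵥ x) ≤ r := by nlinarith
  have h := isSubGamma_sq_gaussianReal (r * (x ⬝ᵥ x).toNNReal) s (by
    rw [NNReal.coe_mul, Real.coe_toNNReal _ hx0]
    nlinarith [abs_nonneg s])
  rw [← gaussVec_map_dotProduct, NNReal.coe_mul, Real.coe_toNNReal _ hx0,
    integrable_map_measure (by fun_prop) hmeas.aemeasurable,
    integral_map hmeas.aemeasurable (by fun_prop)] at h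
  refine ⟨h.1, h.2.trans (Real.exp_le_exp.2 ?_)⟩
  have h2 : ((r : ℝ) * (x ⬝ᵥ x)) ^ 2 ≤ (r : ℝ) ^ 2 := pow_le_pow_left₀ (by positivity) hrx 2
  nlinarith [sq_nonneg s, mul_le_mul_of_nonneg_left h2 (sq_nonneg s)]

theorem integral_exp_dotProduct_sq_le {m : ℕ} {r : NNReal} (hr : r ≠ 0) (x : Fin m → ℝ)
    (hx : x ⬝ᵥ x ≤ 1) :
    Integrable (fun b => Real.exp ((b ⬝ᵥ x) ^ 2 / (4 * r))) (gaussVec m r) ∧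
      ∫ b, Real.exp ((b ⬝ᵥ x) ^ 2 / (4 * r)) ∂gaussVec m r ≤ 2 := by
  have hr0 : (0 : ℝ) < r := by positivity
  have h := isSubGamma_dotProduct_sq m r x hx (1 / (4 * r)) (by
    rw [abs_of_pos (by positivity)]
    field_simp
    norm_num)
  have e : ∀ y : ℝ, y ^ 2 / (4 * r) = 1 / (4 * r) * y ^ 2 := fun y => by ring
  simp only [e]
  refine ⟨h.1, h.2.trans ?_⟩
  have h1 : 1 / (4 * r) * (r * (x ⬝ᵥ x)) + (1 / (4 * r : ℝ)) ^ 2 * (2 * (r : ℝ) ^ 2) ≤ 3 / 8 := by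
    have : 1 / (4 * r) * (r * (x ⬝ᵥ x)) + (1 / (4 * r : ℝ)) ^ 2 * (2 * (r : ℝ) ^ 2) =
      (x ⬝ᵥ x) / 4 + 1 / 8 := by field_simp; ring
    rw [this]
    linarith
  refine (Real.exp_le_exp.2 h1).trans ?_
  have : Real.exp (3 / 8) ≤ Real.exp (Real.log 2) :=
    Real.exp_le_exp.2 (by linarith [Real.log_two_gt_d9])
  rwa [Real.exp_log two_pos] at this

theorem gaussVec_map_neg (m : ℕ) (r : NNReal) :
    (gaussVec m r).map (fun b => -b) = gaussVec m r := by
  have := Measure.pi_map_pi (μ := fun _ : Fin m => gaussianReal 0 r) (f := fun _ (y : ℝ) => -y)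
    (hμ := fun _ => by rw [gaussianReal_map_neg]; infer_instance) (fun _ => by fun_prop)
  simp only [gaussianReal_map_neg, neg_zero] at this
  exact this

theorem integral_sqDev_mul_dotProduct_sq (m : ℕ) (r : NNReal) (x : Fin m → ℝ) :
    ∫ b, sqDev m r b * (b ⬝ᵥ x) ^ 2 ∂gaussVec m r = 2 * (r : ℝ) ^ 2 * (x ⬝ᵥ x) := by
  let φ : Fin m → Fin m → Fin m → Fin m → ℝ → ℝ := fun k i j l y =>
    (if l = k then y ^ 2 - (r : ℝ) else 1) * (if l = i then y else 1) * (if l = j then y else 1)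
  have hφ : ∀ k i j (b : Fin m → ℝ), ((b k) ^ 2 - r) * b i * b j = ∏ l, φ k i j l (b l) := by
    intro k i j b
    simp only [φ, Finset.prod_mul_distrib]
    simp
  have hinteg : ∀ k i j l, Integrable (φ k i j l) (gaussianReal 0 r) := by
    intro k i j l
    have h0 : Integrable (fun _ : ℝ => (1 : ℝ)) (gaussianReal 0 r) := integrable_const 1
    have hp := integrable_pow_gaussianReal r
    have h1 : Integrable (fun y : ℝ => y) (gaussianReal 0 r) := by simpa using hp 1
    simp only [φ]
    split_ifs
    · convert (hp 4).sub ((hp 2).const_mul r) using 2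
      simp; ring
    · convert (hp 3).sub (h1.const_mul r) using 2
      simp; ring
    · convert (hp 3).sub (h1.const_mul r) using 2
      simp; ring
    · convert (hp 2).sub (h0.const_mul r) using 2
      simp
    · convert hp 2 using 2
      ring
    · simpa using h1
    · simpa using h1
    · simp
  have hI : ∀ k i j, Integrable (fun b : Fin m → ℝ => ((b k) ^ 2 - r) * b i * b j)
      (gaussVec m r) := by
    intro k i j
    simp only [hφ]
    exact Integrable.fintype_prod (hinteg k i j)
  have hval : ∀ k i j, ∫ b : Fin m → ℝ, ((b k) ^ 2 - r) * b i * b j ∂gaussVec m r =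
      if i = j then (if i = k then 2 * (r : ℝ) ^ 2 else 0) else 0 := by
    intro k i j
    simp only [hφ]
    rw [gaussVec, integral_fintype_prod_eq_prod]
    split_ifs with h1 h2
    · subst h1 h2
      rw [Finset.prod_eq_single i]
      · simp only [φ, if_true]
        have : ∀ y : ℝ, (y ^ 2 - (r : ℝ)) * y * y = y ^ 4 - r * y ^ 2 := fun y => by ring
        simp only [this]
        rw [integral_sub (integrable_pow_gaussianReal r 4)
          ((integrable_pow_gaussianReal r 2).const_mul _), integral_const_mul,
          integral_sq_gaussianReal, integral_pow_four_gaussianReal]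
        ring
      · intro l _ hl
        simp [φ, hl]
      · simp
    · subst h1
      apply Finset.prod_eq_zero (Finset.mem_univ k)
      have hk : k ≠ i := fun h => h2 h.symm
      simp only [φ, if_true, if_neg hk, mul_one]
      rw [integral_sub (integrable_pow_gaussianReal r 2) (integrable_const _),
        integral_sq_gaussianReal]
      simp
    · by_cases h2 : i = k
      · apply Finset.prod_eq_zero (Finset.mem_univ j)
        have hj : j ≠ k := fun h => h1 (h2.trans h.symm)
        have hj' : j ≠ i := fun h => h1 h.symm
        simp [φ, hj, hj']
      · apply Finset.prod_eq_zero (Finset.mem_univ i)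
        simp [φ, h1, h2]
  have hexp : ∀ b : Fin m → ℝ, sqDev m r b * (b ⬝ᵥ x) ^ 2 =
      ∑ k, ∑ i, ∑ j, x i * x j * (((b k) ^ 2 - r) * b i * b j) := by
    intro b
    have h1 : sqDev m r b = ∑ k, ((b k) ^ 2 - r) := by simp [sqDev, Finset.sum_sub_distrib]
    rw [h1, sq, dotProduct, Finset.sum_mul_sum, Finset.sum_mul]
    refine Finset.sum_congr rfl fun k _ => ?_
    rw [Finset.mul_sum]
    refine Finset.sum_congr rfl fun i _ => ?_
    rw [Finset.mul_sum]
    exact Finset.sum_congr rfl fun j _ => by ring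
  simp only [hexp]
  rw [integral_finsetSum _ fun k _ => integrable_finsetSum _ fun i _ =>
    integrable_finsetSum _ fun j _ => (hI k i j).const_mul _]
  have hk : ∀ k, ∫ b : Fin m → ℝ, ∑ i, ∑ j, x i * x j * (((b k) ^ 2 - r) * b i * b j)
      ∂gaussVec m r = 2 * (r : ℝ) ^ 2 * (x k * x k) := by
    intro k
    rw [integral_finsetSum _ fun i _ => integrable_finsetSum _ fun j _ => (hI k i j).const_mul _]
    have : ∀ i, ∫ b : Fin m → ℝ, ∑ j, x i * x j * (((b k) ^ 2 - r) * b i * b j) ∂gaussVec m r =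
        if i = k then 2 * (r : ℝ) ^ 2 * (x i * x i) else 0 := by
      intro i
      rw [integral_finsetSum _ fun j _ => (hI k i j).const_mul _]
      simp only [integral_const_mul, hval]
      rw [Finset.sum_eq_single i]
      · simp [mul_comm]
      · intro j _ hj
        simp [hj.symm]
      · simp
    simp [this]
  simp only [hk]
  rw [dotProduct, Finset.mul_sum]

/-- The truncation of `sqDev` at level `G`. -/
noncomputable def truncDev (m : ℕ) (r : NNReal) (G : ℝ) (b : Fin m → ℝ) : ℝ :=
  if |sqDev m r b| ≤ G then sqDev m r b else 0

theorem measurable_truncDev (m : ℕ) (r : NNReal) (G : ℝ) : Measurable (truncDev m r G) := by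
  unfold truncDev
  exact Measurable.ite (measurableSet_le (measurable_sqDev m r).abs measurable_const)
    (measurable_sqDev m r) measurable_const

theorem abs_truncDev_le {m : ℕ} {r : NNReal} {G : ℝ} (hG : 0 ≤ G) (b : Fin m → ℝ) :
    |truncDev m r G b| ≤ G := by
  unfold truncDev
  split_ifs with h
  · exact h
  · simpa using hG

theorem sq_truncDev_le (m : ℕ) (r : NNReal) (G : ℝ) (b : Fin m → ℝ) :
    truncDev m r G b ^ 2 ≤ sqDev m r b ^ 2 := by
  unfold truncDev
  split_ifs with h
  · exact le_rfl
  · simpa using sq_nonneg _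

theorem sqDev_neg (m : ℕ) (r : NNReal) (b : Fin m → ℝ) : sqDev m r (-b) = sqDev m r b := by
  simp [sqDev]

theorem truncDev_neg (m : ℕ) (r : NNReal) (G : ℝ) (b : Fin m → ℝ) :
    truncDev m r G (-b) = truncDev m r G b := by
  simp [truncDev, sqDev_neg]

theorem measurable_dotProduct_const {m : ℕ} (x : Fin m → ℝ) :
    Measurable fun b : Fin m → ℝ => b ⬝ᵥ x := by
  unfold dotProduct
  fun_prop

/-- An exponential envelope dominating the moments of `sqDev` and of a linear functional. -/
noncomputable def expEnvelope (m : ℕ) (r : NNReal) (n : ℝ) (x b : Fin m → ℝ) : ℝ :=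
  Real.exp (1 / (4 * r * √n) * sqDev m r b) + Real.exp (-(1 / (4 * r * √n)) * sqDev m r b) +
    Real.exp ((b ⬝ᵥ x) ^ 2 / (4 * r))

theorem integral_expEnvelope_le {m : ℕ} {r : NNReal} (hr : r ≠ 0) {n : ℝ} (hn : 1 ≤ n)
    (hmn : m ≤ n) (x : Fin m → ℝ) (hx : x ⬝ᵥ x ≤ 1) :
    Integrable (expEnvelope m r n x) (gaussVec m r) ∧
      ∫ b, expEnvelope m r n x b ∂gaussVec m r ≤ 6 := by
  have hr0 : (0 : ℝ) < r := by positivity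
  have hn0 : 0 < √n := by positivity
  have hn1 : 1 ≤ √n := Real.one_le_sqrt.2 hn
  have hs : |1 / (4 * r * √n)| * (4 * r) ≤ 1 := by
    rw [abs_of_pos (by positivity)]
    have : 1 / (4 * r * √n) * (4 * r) = 1 / √n := by field_simp
    rw [this]
    exact (div_le_one hn0).2 hn1
  have hb : Real.exp (1 / (4 * r * √n) * 0 +
      (1 / (4 * r * √n)) ^ 2 * (2 * m * (r : ℝ) ^ 2)) ≤ 2 := by
    have h1 : 1 / (4 * r * √n) * 0 + (1 / (4 * r * √n)) ^ 2 * (2 * m * (r : ℝ) ^ 2) =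
        m / (8 * n) := by
      have : √n ^ 2 = n := Real.sq_sqrt (by linarith)
      rw [mul_zero, zero_add, div_pow, mul_pow, mul_pow, this]
      field_simp
      ring
    have h2 : (m : ℝ) / (8 * n) ≤ 1 / 8 := by
      rw [div_le_div_iff₀ (by positivity) (by norm_num)]
      linarith
    rw [h1]
    have : Real.exp (m / (8 * n)) ≤ Real.exp (Real.log 2) :=
      Real.exp_le_exp.2 (by linarith [Real.log_two_gt_d9])
    rwa [Real.exp_log two_pos] at this
  obtain ⟨i1, j1⟩ := isSubGamma_sqDev m r _ hs
  obtain ⟨i2, j2⟩ := isSubGamma_sqDev m r (-(1 / (4 * r * √n))) (by rwa [abs_neg])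
  obtain ⟨i3, j3⟩ := integral_exp_dotProduct_sq_le hr x hx
  have i12 : Integrable (fun b => Real.exp (1 / (4 * r * √n) * sqDev m r b) +
      Real.exp (-(1 / (4 * r * √n)) * sqDev m r b)) (gaussVec m r) := i1.add i2
  refine ⟨i12.add i3, ?_⟩
  unfold expEnvelope
  rw [integral_add i12 i3, integral_add i1 i2]
  rw [neg_sq] at j2
  simp only [mul_zero] at hb j1 j2
  linarith

theorem sq_mul_le_of_exp_bound {g X n r P F : ℝ} (hn : 1 ≤ n) (hr : 0 < r)
    (hP : (1 / (4 * r * √n) * g) ^ 4 / 24 ≤ P) (hF : X ^ 2 ≤ 98304 * F) :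
    g ^ 2 * X ≤ 50000 * n * r ^ 2 * (P + F) := by
  have hn0 : 0 < n := by linarith
  have h4 : √n ^ 4 = n ^ 2 := by
    rw [show 4 = 2 * 2 by norm_num, pow_mul, Real.sq_sqrt hn0.le]
  have hP0 : 0 ≤ P := le_trans (by positivity) hP
  have hF0 : 0 ≤ F := by nlinarith [sq_nonneg X]
  have e1 : (1 / (4 * r * √n) * g) ^ 4 / 24 = g ^ 4 / (6144 * n ^ 2 * r ^ 4) := by
    rw [mul_pow, div_pow, mul_pow, mul_pow, h4]
    field_simp
    ring
  rw [e1, div_le_iff₀ (by positivity)] at hP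
  set c := n * r ^ 2 with hc
  have hc0 : 0 < c := by positivity
  have h5 : g ^ 4 ≤ 6144 * c ^ 2 * P := by
    rw [hc]
    linarith
  have h6 : 2 * c * (g ^ 2 * X) ≤ g ^ 4 + c ^ 2 * X ^ 2 := by nlinarith [sq_nonneg (g ^ 2 - c * X)]
  have h7 : 2 * c * (g ^ 2 * X) ≤ 2 * c * (50000 * c * (P + F)) := by
    have := mul_le_mul_of_nonneg_left hF (sq_nonneg c)
    nlinarith [mul_nonneg (sq_nonneg c) hP0, mul_nonneg (sq_nonneg c) hF0]
  have := le_of_mul_le_mul_left h7 (by positivity)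
  rw [hc] at this
  linarith

theorem pow_four_div_le_exp_add_exp_neg (y : ℝ) : y ^ 4 / 24 ≤ Real.exp y + Real.exp (-y) := by
  have h := Real.pow_div_factorial_le_exp |y| (abs_nonneg y) 4
  have h1 : |y| ^ 4 = y ^ 4 := by rw [show 4 = 2 * 2 by norm_num, pow_mul, sq_abs, ← pow_mul]
  rw [h1] at h
  have h2 : Real.exp |y| ≤ Real.exp y + Real.exp (-y) := by
    rcases abs_cases y with ⟨h, _⟩ | ⟨h, _⟩ <;> rw [h] <;>
      linarith [Real.exp_pos y, Real.exp_pos (-y)]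
  norm_num [Nat.factorial] at h
  linarith

theorem sqDev_sq_mul_le {m : ℕ} {r : NNReal} (hr : r ≠ 0) {n : ℝ} (hn : 1 ≤ n) (x b : Fin m → ℝ)
    {X : ℝ} (hX : X ^ 2 ≤ 98304 * Real.exp ((b ⬝ᵥ x) ^ 2 / (4 * r))) :
    sqDev m r b ^ 2 * X ≤ 50000 * n * (r : ℝ) ^ 2 * expEnvelope m r n x b := by
  have hr0 : (0 : ℝ) < r := by positivity
  have h := pow_four_div_le_exp_add_exp_neg (1 / (4 * r * √n) * sqDev m r b)
  rw [← neg_mul] at h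
  exact sq_mul_le_of_exp_bound hn hr0 h hX

theorem sqDev_sq_mul_le_linear {m : ℕ} {r : NNReal} (hr : r ≠ 0) {n : ℝ} (hn : 1 ≤ n)
    (x b : Fin m → ℝ) :
    sqDev m r b ^ 2 * ((b ⬝ᵥ x) ^ 2 * Real.exp ((b ⬝ᵥ x) ^ 2 / (16 * r))) ≤
      50000 * n * (r : ℝ) ^ 3 * expEnvelope m r n x b := by
  have hr0 : (0 : ℝ) < r := by positivity
  set q := (b ⬝ᵥ x) ^ 2 / r with hq
  have hq0 : 0 ≤ q := by positivity
  have e1 : (b ⬝ᵥ x) ^ 2 = r * q := by rw [hq]; field_simp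
  have e2 : (b ⬝ᵥ x) ^ 2 / (16 * r) = q / 16 := by rw [hq]; field_simp
  have e3 : (b ⬝ᵥ x) ^ 2 / (4 * r) = q / 8 + q / 8 := by rw [hq]; field_simp; ring
  have h := sqDev_sq_mul_le hr hn x b (X := q * Real.exp (q / 16)) (by
    rw [e3, Real.exp_add, mul_pow, ← Real.exp_nat_mul]
    have h1 : Real.exp ((2 : ℕ) * (q / 16)) = Real.exp (q / 8) := by congr 1; push_cast; ring
    rw [h1]
    have h2 := Real.pow_div_factorial_le_exp (q / 8) (by positivity) 2
    norm_num [Nat.factorial] at h2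
    have h3 : q ^ 2 ≤ 98304 * Real.exp (q / 8) := by nlinarith [Real.exp_pos (q / 8)]
    nlinarith [Real.exp_pos (q / 8)])
  rw [e2, e1]
  nlinarith

theorem sqDev_sq_mul_le_quadratic {m : ℕ} {r : NNReal} (hr : r ≠ 0) {n : ℝ} (hn : 1 ≤ n)
    (x b : Fin m → ℝ) :
    sqDev m r b ^ 2 * ((b ⬝ᵥ x) ^ 4 * Real.exp ((b ⬝ᵥ x) ^ 2 / (16 * r))) ≤
      50000 * n * (r : ℝ) ^ 4 * expEnvelope m r n x b := by
  have hr0 : (0 : ℝ) < r := by positivity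
  set q := (b ⬝ᵥ x) ^ 2 / r with hq
  have hq0 : 0 ≤ q := by positivity
  have e1 : (b ⬝ᵥ x) ^ 4 = r ^ 2 * q ^ 2 := by rw [hq]; field_simp
  have e2 : (b ⬝ᵥ x) ^ 2 / (16 * r) = q / 16 := by rw [hq]; field_simp
  have e3 : (b ⬝ᵥ x) ^ 2 / (4 * r) = q / 8 + q / 8 := by rw [hq]; field_simp; ring
  have h := sqDev_sq_mul_le hr hn x b (X := q ^ 2 * Real.exp (q / 16)) (by
    rw [e3, Real.exp_add, mul_pow, ← Real.exp_nat_mul]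
    have h1 : Real.exp ((2 : ℕ) * (q / 16)) = Real.exp (q / 8) := by congr 1; push_cast; ring
    rw [h1]
    have h2 := Real.pow_div_factorial_le_exp (q / 8) (by positivity) 4
    norm_num [Nat.factorial] at h2
    have h3 : (q ^ 2) ^ 2 ≤ 98304 * Real.exp (q / 8) := by nlinarith [Real.exp_pos (q / 8)]
    nlinarith [Real.exp_pos (q / 8)])
  rw [e2, e1]
  nlinarith [sq_nonneg (r : ℝ)]

theorem integral_truncDev_mul_dotProduct (m : ℕ) (r : NNReal) (G : ℝ) (x : Fin m → ℝ) :
    ∫ b, truncDev m r G b * (b ⬝ᵥ x) ∂gaussVec m r = 0 := by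
  have hm : Measurable fun b : Fin m → ℝ => truncDev m r G b * (b ⬝ᵥ x) :=
    (measurable_truncDev m r G).mul (measurable_dotProduct_const x)
  have h : ∫ b, truncDev m r G b * (b ⬝ᵥ x) ∂gaussVec m r =
      -∫ b, truncDev m r G b * (b ⬝ᵥ x) ∂gaussVec m r := by
    conv_lhs => rw [← gaussVec_map_neg m r]
    rw [integral_map (by fun_prop) hm.aestronglyMeasurable, ← integral_neg]
    refine integral_congr_ae (Filter.Eventually.of_forall fun b => ?_)
    simp [truncDev_neg]
  linarith

theorem isSubGamma_truncDev_mul_dotProduct_of_moment {m : ℕ} {r : NNReal} (hr : r ≠ 0) {n G : ℝ}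
    (hn : 1 ≤ n) (hmn : m ≤ n) (hG : 0 ≤ G) (x : Fin m → ℝ) (hx : x ⬝ᵥ x ≤ 1) :
    IsSubGamma (gaussVec m r) (fun b => truncDev m r G b * (b ⬝ᵥ x)) 0
      (600000 * n * (r : ℝ) ^ 3) (4 * (G * √r)) := by
  have hr0 : (0 : ℝ) < r := by positivity
  obtain ⟨hi, hle⟩ := integral_expEnvelope_le hr hn hmn x hx
  rw [← integral_truncDev_mul_dotProduct m r G x]
  refine IsSubGamma.of_moment (W := fun b => 100000 * n * (r : ℝ) ^ 3 * expEnvelope m r n x b)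
    ((measurable_truncDev m r G).mul (measurable_dotProduct_const x)) (hi.const_mul _) ?_ ?_
  · rw [integral_const_mul]
    have : 0 ≤ n * (r : ℝ) ^ 3 := by positivity
    nlinarith
  · intro s hs b
    set d := b ⬝ᵥ x with hd
    have h1 := sqDev_sq_mul_le_linear hr hn x b
    rw [← hd] at h1
    have h2 : |s * (truncDev m r G b * d)| ≤ d ^ 2 / (16 * r) + 1 / 4 := by
      rw [abs_mul, abs_mul]
      have h3 : |s| * (|truncDev m r G b| * |d|) ≤ |s| * (G * |d|) := by
        gcongr
        exact abs_truncDev_le hG b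
      have hsr : 0 < √(r : ℝ) := Real.sqrt_pos.2 hr0
      set q := |d| / √r with hq
      have hdq : |d| = √r * q := by rw [hq]; field_simp
      have hq0 : 0 ≤ q := by positivity
      have hd2 : d ^ 2 / (16 * r) = q ^ 2 / 16 := by
        rw [← sq_abs d, hdq, mul_pow, Real.sq_sqrt hr0.le]
        field_simp
      rw [hd2]
      have h4 : |s| * (G * |d|) ≤ q / 4 := by
        rw [hdq]
        nlinarith
      nlinarith [sq_nonneg (q - 2)]
    have h3 : Real.exp |s * (truncDev m r G b * d)| ≤ 2 * Real.exp (d ^ 2 / (16 * r)) := by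
      refine (Real.exp_le_exp.2 h2).trans ?_
      rw [Real.exp_add]
      have : Real.exp (1 / 4) ≤ Real.exp (Real.log 2) :=
        Real.exp_le_exp.2 (by linarith [Real.log_two_gt_d9])
      rw [Real.exp_log two_pos] at this
      nlinarith [Real.exp_pos (d ^ 2 / (16 * r))]
    calc (truncDev m r G b * d) ^ 2 * Real.exp |s * (truncDev m r G b * d)|
        ≤ (sqDev m r b ^ 2 * d ^ 2) * (2 * Real.exp (d ^ 2 / (16 * r))) := by
          rw [mul_pow]
          gcongr ?_ * d ^ 2 * ?_
          exact sq_truncDev_le m r G b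
      _ = 2 * (sqDev m r b ^ 2 * (d ^ 2 * Real.exp (d ^ 2 / (16 * r)))) := by ring
      _ ≤ _ := by linarith

theorem isSubGamma_truncDev_mul_dotProduct (m : ℕ) (r : NNReal) {G : ℝ} (hG : 0 ≤ G)
    (x : Fin m → ℝ) (hx : x ⬝ᵥ x ≤ 1) :
    IsSubGamma (gaussVec m r) (fun b => truncDev m r G b * (b ⬝ᵥ x)) 0 (G ^ 2 * (r / 2)) 0 := by
  intro s _
  have hm : Measurable fun b : Fin m → ℝ => Real.exp (s * (truncDev m r G b * (b ⬝ᵥ x))) :=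
    (((measurable_truncDev m r G).mul (measurable_dotProduct_const x)).const_mul s).exp
  have hG1 := isSubGamma_dotProduct m r x hx (s * G) (by simp)
  have hG2 := isSubGamma_dotProduct m r x hx (-(s * G)) (by simp)
  have hcosh : ∀ b : Fin m → ℝ, Real.cosh (s * (truncDev m r G b * (b ⬝ᵥ x))) ≤
      Real.cosh (s * G * (b ⬝ᵥ x)) := by
    intro b
    rw [Real.cosh_le_cosh, abs_mul, abs_mul, abs_mul, abs_mul, mul_assoc, abs_of_nonneg hG]
    gcongr
    exact abs_truncDev_le hG b
  have hI : Integrable (fun b => Real.exp (s * (truncDev m r G b * (b ⬝ᵥ x)))) (gaussVec m r) := by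
    refine (hG1.1.add hG2.1).mono' hm.aestronglyMeasurable
      (Filter.Eventually.of_forall fun b => ?_)
    have := hcosh b
    rw [Real.cosh_eq, Real.cosh_eq] at this
    rw [Real.norm_eq_abs, abs_of_pos (Real.exp_pos _)]
    simp only [Pi.add_apply, neg_mul]
    linarith [Real.exp_pos (-(s * (truncDev m r G b * (b ⬝ᵥ x))))]
  refine ⟨hI, ?_⟩
  have hneg : ∫ b, Real.exp (s * (truncDev m r G b * (b ⬝ᵥ x))) ∂gaussVec m r =
      ∫ b, Real.exp (-(s * (truncDev m r G b * (b ⬝ᵥ x)))) ∂gaussVec m r := by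
    conv_lhs => rw [← gaussVec_map_neg m r]
    rw [integral_map (by fun_prop) hm.aestronglyMeasurable]
    refine integral_congr_ae (Filter.Eventually.of_forall fun b => ?_)
    simp [truncDev_neg]
  have hI' : Integrable (fun b => Real.exp (-(s * (truncDev m r G b * (b ⬝ᵥ x)))))
      (gaussVec m r) := by
    refine (hG1.1.add hG2.1).mono' ?_ (Filter.Eventually.of_forall fun b => ?_)
    · simp only [Real.exp_neg]
      exact hm.inv.aestronglyMeasurable
    have := hcosh b
    rw [Real.cosh_eq, Real.cosh_eq] at this
    rw [Real.norm_eq_abs, abs_of_pos (Real.exp_pos _)]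
    simp only [Pi.add_apply, neg_mul]
    linarith [Real.exp_pos (s * (truncDev m r G b * (b ⬝ᵥ x)))]
  have hsum : ∫ b, (Real.exp (s * (truncDev m r G b * (b ⬝ᵥ x))) +
      Real.exp (-(s * (truncDev m r G b * (b ⬝ᵥ x))))) ∂gaussVec m r ≤
      ∫ b, (Real.exp (s * G * (b ⬝ᵥ x)) + Real.exp (-(s * G) * (b ⬝ᵥ x))) ∂gaussVec m r := by
    refine integral_mono (hI.add hI') (hG1.1.add hG2.1) fun b => ?_
    have := hcosh b
    rw [Real.cosh_eq, Real.cosh_eq] at this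
    simp only [neg_mul]
    linarith
  rw [integral_add hI hI', ← hneg, integral_add hG1.1 hG2.1] at hsum
  have h1 := hG1.2
  have h2 := hG2.2
  rw [neg_sq] at h2
  rw [show s * 0 + s ^ 2 * (G ^ 2 * ((r : ℝ) / 2)) = (s * G) ^ 2 * (r / 2) by ring]
  simp only [mul_zero, zero_add] at h1 h2
  linarith

theorem isSubGamma_truncDev_mul_dotProduct_sq {m : ℕ} {r : NNReal} (hr : r ≠ 0) {n G : ℝ}
    (hn : 1 ≤ n) (hmn : m ≤ n) (hG : 0 ≤ G) (x : Fin m → ℝ) (hx : x ⬝ᵥ x ≤ 1) :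
    IsSubGamma (gaussVec m r) (fun b => truncDev m r G b * (b ⬝ᵥ x) ^ 2)
      (∫ b, truncDev m r G b * (b ⬝ᵥ x) ^ 2 ∂gaussVec m r)
      (300000 * n * (r : ℝ) ^ 4) (16 * (G * r)) := by
  have hr0 : (0 : ℝ) < r := by positivity
  obtain ⟨hi, hle⟩ := integral_expEnvelope_le hr hn hmn x hx
  refine IsSubGamma.of_moment (W := fun b => 50000 * n * (r : ℝ) ^ 4 * expEnvelope m r n x b)
    ((measurable_truncDev m r G).mul ((measurable_dotProduct_const x).pow_const 2))
    (hi.const_mul _) ?_ ?_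
  · rw [integral_const_mul]
    have : 0 ≤ n * (r : ℝ) ^ 4 := by positivity
    nlinarith
  · intro s hs b
    set d := b ⬝ᵥ x with hd
    have h1 := sqDev_sq_mul_le_quadratic hr hn x b
    rw [← hd] at h1
    have h2 : |s * (truncDev m r G b * d ^ 2)| ≤ d ^ 2 / (16 * r) := by
      rw [abs_mul, abs_mul, abs_of_nonneg (sq_nonneg d), le_div_iff₀ (by positivity)]
      have h3 : |s| * |truncDev m r G b| ≤ |s| * G := by
        gcongr
        exact abs_truncDev_le hG b
      have h4 : |s| * |truncDev m r G b| * (16 * r) ≤ 1 := by nlinarith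
      nlinarith [mul_le_mul_of_nonneg_right h4 (sq_nonneg d)]
    calc (truncDev m r G b * d ^ 2) ^ 2 * Real.exp |s * (truncDev m r G b * d ^ 2)|
        ≤ (sqDev m r b ^ 2 * (d ^ 2) ^ 2) * Real.exp (d ^ 2 / (16 * r)) := by
          rw [mul_pow]
          gcongr ?_ * (d ^ 2) ^ 2 * ?_
          · exact sq_truncDev_le m r G b
          · exact Real.exp_le_exp.2 h2
      _ = sqDev m r b ^ 2 * (d ^ 4 * Real.exp (d ^ 2 / (16 * r))) := by ring
      _ ≤ _ := h1

theorem abs_integral_truncDev_sub_le {m : ℕ} {r : NNReal} (hr : r ≠ 0) {n G : ℝ}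
    (hn : 1 ≤ n) (hmn : m ≤ n) (x : Fin m → ℝ) (hx : x ⬝ᵥ x ≤ 1) :
    |∫ b, truncDev m r G b * (b ⬝ᵥ x) ^ 2 ∂gaussVec m r - 2 * (r : ℝ) ^ 2 * (x ⬝ᵥ x)| ≤
      300000 * n * (r : ℝ) ^ 3 + r * (gaussVec m r).real {b | G < |sqDev m r b|} := by
  have hr0 : (0 : ℝ) < r := by positivity
  obtain ⟨hi, hle⟩ := integral_expEnvelope_le hr hn hmn x hx
  have hq : ∀ b : Fin m → ℝ, sqDev m r b ^ 2 * (b ⬝ᵥ x) ^ 4 ≤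
      50000 * n * (r : ℝ) ^ 4 * expEnvelope m r n x b := by
    intro b
    refine le_trans ?_ (sqDev_sq_mul_le_quadratic hr hn x b)
    gcongr
    exact le_mul_of_one_le_right (by positivity) (Real.one_le_exp (by positivity))
  have hS : MeasurableSet {b : Fin m → ℝ | G < |sqDev m r b|} :=
    measurableSet_lt measurable_const (measurable_sqDev m r).abs
  have hpt : ∀ t : ℝ, 0 ≤ t → ∀ b : Fin m → ℝ, ∀ c : ℝ, c ^ 2 ≤ t →
      |c * (sqDev m r b * (b ⬝ᵥ x) ^ 2)| ≤
        r * t + 50000 * n * (r : ℝ) ^ 3 * expEnvelope m r n x b := by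
    intro t ht b c hc
    have h1 := hq b
    set y := sqDev m r b * (b ⬝ᵥ x) ^ 2 with hy
    have hy2 : y ^ 2 ≤ r * (50000 * n * (r : ℝ) ^ 3 * expEnvelope m r n x b) := by
      rw [hy]
      linarith
    set A := 50000 * n * (r : ℝ) ^ 3 * expEnvelope m r n x b
    have hA : 0 ≤ A := by
      have : 0 ≤ r * A := (sq_nonneg y).trans hy2
      exact nonneg_of_mul_nonneg_right this hr0
    refine abs_le_of_sq_le_sq ?_ (by positivity)
    rw [mul_pow]
    calc c ^ 2 * y ^ 2 ≤ t * (r * A) := mul_le_mul hc hy2 (sq_nonneg _) ht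
      _ ≤ (r * t + A) ^ 2 := by
          nlinarith [mul_nonneg (mul_nonneg hr0.le ht) hA, sq_nonneg (r * t), sq_nonneg A]
  have hmg : Measurable fun b : Fin m → ℝ => sqDev m r b * (b ⬝ᵥ x) ^ 2 :=
    (measurable_sqDev m r).mul ((measurable_dotProduct_const x).pow_const 2)
  have hI1 : Integrable (fun b : Fin m → ℝ => sqDev m r b * (b ⬝ᵥ x) ^ 2) (gaussVec m r) := by
    refine Integrable.mono' ((integrable_const (r * 1 : ℝ)).add
      (hi.const_mul (50000 * n * (r : ℝ) ^ 3)))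
      hmg.aestronglyMeasurable (Filter.Eventually.of_forall fun b => ?_)
    simpa using hpt 1 zero_le_one b 1 (by norm_num)
  have hI2 : Integrable (fun b : Fin m → ℝ => truncDev m r G b * (b ⬝ᵥ x) ^ 2) (gaussVec m r) := by
    refine hI1.mono ((measurable_truncDev m r G).mul
      ((measurable_dotProduct_const x).pow_const 2)).aestronglyMeasurable
      (Filter.Eventually.of_forall fun b => ?_)
    rw [Real.norm_eq_abs, Real.norm_eq_abs, abs_mul, abs_mul]
    exact mul_le_mul_of_nonneg_right (sq_le_sq.1 (sq_truncDev_le m r G b)) (abs_nonneg _)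
  rw [← integral_sqDev_mul_dotProduct_sq, ← integral_sub hI2 hI1]
  have hind : Integrable (({b : Fin m → ℝ | G < |sqDev m r b|}).indicator fun _ => (r : ℝ))
      (gaussVec m r) := (integrable_const _).indicator hS
  have hb : ‖∫ b, (truncDev m r G b * (b ⬝ᵥ x) ^ 2 - sqDev m r b * (b ⬝ᵥ x) ^ 2) ∂gaussVec m r‖ ≤
      ∫ b, (({b : Fin m → ℝ | G < |sqDev m r b|}).indicator (fun _ => (r : ℝ)) b +
        50000 * n * (r : ℝ) ^ 3 * expEnvelope m r n x b) ∂gaussVec m r := by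
    refine norm_integral_le_of_norm_le (hind.add (hi.const_mul _))
      (Filter.Eventually.of_forall fun b => ?_)
    rw [Real.norm_eq_abs]
    by_cases hG : |sqDev m r b| ≤ G
    · have h1 : b ∉ {b : Fin m → ℝ | G < |sqDev m r b|} := fun h => absurd hG (not_le.2 h)
      rw [Set.indicator_of_notMem h1]
      have := hpt 0 le_rfl b 0 (by norm_num)
      simp only [truncDev, if_pos hG, sub_self]
      simpa using this
    · have h1 : b ∈ {b : Fin m → ℝ | G < |sqDev m r b|} := not_le.1 hG
      rw [Set.indicator_of_mem h1]
      have := hpt 1 zero_le_one b (-1) (by norm_num)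
      simp only [truncDev, if_neg hG]
      simpa using this
  rw [integral_add hind (hi.const_mul _), integral_indicator_const _ hS, integral_const_mul,
    smul_eq_mul, Real.norm_eq_abs] at hb
  have : 0 ≤ n * (r : ℝ) ^ 3 := by positivity
  nlinarith

theorem eucNorm_sq {k : ℕ} (w : Fin k → ℝ) : eucNorm w ^ 2 = w ⬝ᵥ w := by
  rw [eucNorm, Real.sq_sqrt (Finset.sum_nonneg fun i _ => sq_nonneg _)]
  simp [dotProduct, sq]

theorem eucNorm_nonneg {k : ℕ} (w : Fin k → ℝ) : 0 ≤ eucNorm w := Real.sqrt_nonneg _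

theorem mulVec_dotProduct_mulVec {k l : ℕ} (A : Matrix (Fin k) (Fin l) ℝ) (w z : Fin l → ℝ) :
    A.mulVec w ⬝ᵥ A.mulVec z = w ⬝ᵥ (Aᵀ * A).mulVec z := by
  rw [← Matrix.mulVec_mulVec, Matrix.dotProduct_mulVec w, Matrix.vecMul_transpose]

theorem specMat_transpose {N n : ℕ} (Y : Matrix (Fin N) (Fin n) ℝ) : (specMat Y)ᵀ = specMat Y := by
  ext i j
  simp [specMat, Matrix.sum_apply, Matrix.vecMulVec_apply, Matrix.one_apply, mul_comm, eq_comm]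

theorem specMat_mulVec {N n : ℕ} (Y : Matrix (Fin N) (Fin n) ℝ) (w : Fin n → ℝ) :
    (specMat Y).mulVec w =
      ∑ i, ((Y i ⬝ᵥ Y i - ((n : ℝ) - 1) / N) * (Y i ⬝ᵥ w)) • Y i - ((3 : ℝ) / N) • w := by
  rw [specMat, Matrix.sub_mulVec, Matrix.sum_mulVec, Matrix.smul_mulVec, Matrix.one_mulVec]
  congr 1
  refine Finset.sum_congr rfl fun i _ => ?_
  rw [Matrix.smul_mulVec]
  ext j
  rw [Matrix.vecMulVec_mulVec]
  simp only [dotProduct, sq, Pi.smul_apply, smul_eq_mul, MulOpposite.smul_eq_mul_unop,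
    MulOpposite.unop_op]
  ring

theorem dotProduct_specMat_mulVec {N n : ℕ} (Y : Matrix (Fin N) (Fin n) ℝ) (w : Fin n → ℝ) :
    w ⬝ᵥ (specMat Y).mulVec w =
      ∑ i, (Y i ⬝ᵥ Y i - ((n : ℝ) - 1) / N) * (Y i ⬝ᵥ w) ^ 2 - 3 / N * (w ⬝ᵥ w) := by
  rw [specMat_mulVec, dotProduct_sub, dotProduct_smul, dotProduct_sum, smul_eq_mul]
  congr 1
  refine Finset.sum_congr rfl fun i _ => ?_
  rw [dotProduct_smul, smul_eq_mul, dotProduct_comm w]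
  ring

theorem mulVec_specMat_mul {N n : ℕ} (Y : Matrix (Fin N) (Fin n) ℝ) (Q : Matrix (Fin n) (Fin n) ℝ)
    (hQ : Q * Qᵀ = 1) (u : Fin n → ℝ) :
    Q.mulVec ((specMat (Y * Q)).mulVec u) = (specMat Y).mulVec (Q.mulVec u) := by
  have hrow : ∀ i, (Y * Q) i = Qᵀ.mulVec (Y i) := by
    intro i
    ext j
    simp [Matrix.mul_apply, Matrix.mulVec, dotProduct, mul_comm]
  have hQQ : ∀ z, Q.mulVec (Qᵀ.mulVec z) = z := by
    intro z
    rw [Matrix.mulVec_mulVec, hQ, Matrix.one_mulVec]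
  have hdot : ∀ z y, Qᵀ.mulVec z ⬝ᵥ y = z ⬝ᵥ Q.mulVec y := by
    intro z y
    rw [Matrix.mulVec_transpose, Matrix.dotProduct_mulVec]
  rw [specMat_mulVec, specMat_mulVec, Matrix.mulVec_sub, Matrix.mulVec_sum, Matrix.mulVec_smul]
  congr 1
  refine Finset.sum_congr rfl fun i _ => ?_
  rw [Matrix.mulVec_smul, hrow, hQQ, hdot, hdot, hQQ]

theorem eucNorm_mulVec_of_orthogonal {n : ℕ} (Q : Matrix (Fin n) (Fin n) ℝ) (hQ : Qᵀ * Q = 1)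
    (u : Fin n → ℝ) : eucNorm (Q.mulVec u) = eucNorm u := by
  have h : eucNorm (Q.mulVec u) ^ 2 = eucNorm u ^ 2 := by
    rw [eucNorm_sq, eucNorm_sq, mulVec_dotProduct_mulVec, hQ, Matrix.one_mulVec]
  exact (pow_left_inj₀ (eucNorm_nonneg _) (eucNorm_nonneg _) two_ne_zero).1 h

theorem IsLeadingEigen.mulVec_of_orthogonal {N n : ℕ} {Y : Matrix (Fin N) (Fin n) ℝ}
    {Q : Matrix (Fin n) (Fin n) ℝ} (hQ : Qᵀ * Q = 1) {u : Fin n → ℝ}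
    (hu : IsLeadingEigen (specMat (Y * Q)) u) : IsLeadingEigen (specMat Y) (Q.mulVec u) := by
  have hQ' : Q * Qᵀ = 1 := mul_eq_one_comm.1 hQ
  obtain ⟨h1, μ, h2, h3⟩ := hu
  refine ⟨by rw [eucNorm_mulVec_of_orthogonal Q hQ, h1], μ, ?_, ?_⟩
  · rw [← mulVec_specMat_mul Y Q hQ', h2, Matrix.mulVec_smul]
  · rintro μ' ⟨w, hw, hw'⟩
    have hw2 : Q.mulVec (Qᵀ.mulVec w) = w := by rw [Matrix.mulVec_mulVec, hQ', Matrix.one_mulVec]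
    refine h3 μ' ⟨Qᵀ.mulVec w, fun h => hw ?_, ?_⟩
    · rw [← hw2, h, Matrix.mulVec_zero]
    · have h4 := mulVec_specMat_mul Y Q hQ' (Qᵀ.mulVec w)
      rw [hw2, hw'] at h4
      have h5 := congrArg Qᵀ.mulVec h4
      rwa [Matrix.mulVec_mulVec, hQ, Matrix.one_mulVec, Matrix.mulVec_smul] at h5

theorem rowCat_zero {m : ℕ} (a : ℝ) (b : Fin m → ℝ) : rowCat (n := m + 1) a b 0 = a := by
  simp [rowCat]

theorem rowCat_succ {m : ℕ} (a : ℝ) (b : Fin m → ℝ) (j : Fin m) :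
    rowCat (n := m + 1) a b j.succ = b j := by
  simp [rowCat]

theorem rowCat_dotProduct {m : ℕ} (a : ℝ) (b : Fin m → ℝ) (w : Fin (m + 1) → ℝ) :
    rowCat (n := m + 1) a b ⬝ᵥ w = a * w 0 + b ⬝ᵥ Fin.tail w := by
  simp only [dotProduct, Fin.sum_univ_succ, rowCat_zero, rowCat_succ, Fin.tail]

theorem rowCat_dotProduct_self {m : ℕ} (a : ℝ) (b : Fin m → ℝ) :
    rowCat (n := m + 1) a b ⬝ᵥ rowCat (n := m + 1) a b = a ^ 2 + ∑ j, b j ^ 2 := by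
  simp only [dotProduct, Fin.sum_univ_succ, rowCat_zero, rowCat_succ, sq]

theorem dotProduct_self_eq_head_add_tail {m : ℕ} (w : Fin (m + 1) → ℝ) :
    w ⬝ᵥ w = w 0 ^ 2 + Fin.tail w ⬝ᵥ Fin.tail w := by
  simp only [dotProduct, Fin.sum_univ_succ, Fin.tail, sq]

theorem gaussBasis_quadForm_sub {N m : ℕ} (hN : 0 < N) (v : Fin N → ℝ) (B : Fin N → Fin m → ℝ)
    (w : Fin (m + 1) → ℝ) :
    w ⬝ᵥ (specMat (gaussBasis (n := m + 1) v B)).mulVec w - (∑ i, v i ^ 4 - 3 / N) * w 0 ^ 2 =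
      w 0 ^ 2 * ∑ i, v i ^ 2 * sqDev m (N : NNReal)⁻¹ (B i) +
      2 * w 0 * ∑ i, v i ^ 3 * (B i ⬝ᵥ Fin.tail w) +
      2 * w 0 * ∑ i, v i * (sqDev m (N : NNReal)⁻¹ (B i) * (B i ⬝ᵥ Fin.tail w)) +
      ∑ i, v i ^ 2 * ((B i ⬝ᵥ Fin.tail w) ^ 2 - (N : ℝ)⁻¹ * (Fin.tail w ⬝ᵥ Fin.tail w)) +
      (∑ i, sqDev m (N : NNReal)⁻¹ (B i) * (B i ⬝ᵥ Fin.tail w) ^ 2 -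
        2 * (N : ℝ)⁻¹ * (Fin.tail w ⬝ᵥ Fin.tail w)) +
      (∑ i, v i ^ 2 - 1) * (N : ℝ)⁻¹ * (Fin.tail w ⬝ᵥ Fin.tail w) := by
  have hN' : (N : ℝ) ≠ 0 := by positivity
  have hrow : ∀ i, gaussBasis (n := m + 1) v B i = rowCat (n := m + 1) (v i) (B i) := fun i => rfl
  rw [dotProduct_specMat_mulVec, dotProduct_self_eq_head_add_tail w]
  simp only [hrow, rowCat_dotProduct_self]
  simp only [rowCat_dotProduct]
  set xx := Fin.tail w ⬝ᵥ Fin.tail w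
  have hterm : ∀ i, (v i ^ 2 + ∑ j, B i j ^ 2 - (((m + 1 : ℕ) : ℝ) - 1) / N) *
      (v i * w 0 + B i ⬝ᵥ Fin.tail w) ^ 2 =
      w 0 ^ 2 * v i ^ 4 + w 0 ^ 2 * (v i ^ 2 * sqDev m (N : NNReal)⁻¹ (B i)) +
      2 * w 0 * (v i ^ 3 * (B i ⬝ᵥ Fin.tail w)) +
      2 * w 0 * (v i * (sqDev m (N : NNReal)⁻¹ (B i) * (B i ⬝ᵥ Fin.tail w))) +
      v i ^ 2 * ((B i ⬝ᵥ Fin.tail w) ^ 2 - (N : ℝ)⁻¹ * xx) +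
      sqDev m (N : NNReal)⁻¹ (B i) * (B i ⬝ᵥ Fin.tail w) ^ 2 + (N : ℝ)⁻¹ * xx * v i ^ 2 := by
    intro i
    simp only [sqDev]
    push_cast
    ring
  rw [Finset.sum_congr rfl fun i _ => hterm i]
  simp only [Finset.sum_add_distrib, ← Finset.mul_sum]
  ring

theorem eucNorm_mulVec_sub_le {N m : ℕ} (v : Fin N → ℝ) (B : Fin N → Fin m → ℝ)
    (Q : Matrix (Fin (m + 1)) (Fin (m + 1)) ℝ) (hQ : Qᵀ * Q = 1)
    (s : Finset (Fin (m + 1) → ℝ)) (hs : ∀ w ∈ s, w ⬝ᵥ w = 1)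
    (hnet : ∀ w : Fin (m + 1) → ℝ, w ⬝ᵥ w = 1 → ∃ c ∈ s, (w - c) ⬝ᵥ (w - c) ≤ 1 / 4)
    {ε K : ℝ} (hε : ∀ w ∈ s, |w ⬝ᵥ (specMat (gaussBasis (n := m + 1) v B)).mulVec w -
      (∑ i, v i ^ 4 - 3 / N) * w 0 ^ 2| ≤ ε) (hK0 : 0 ≤ K)
    (hK : ∀ w ∈ s, ∑ i, (v i * w 0 + B i ⬝ᵥ Fin.tail w) ^ 2 ≤ K ^ 2)
    (u : Fin (m + 1) → ℝ) (hu : IsLeadingEigen (specMat (gaussBasis (n := m + 1) v B * Q)) u) :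
    ∃ σ : ℝ, (σ = 1 ∨ σ = -1) ∧ |∑ i, v i ^ 4 - 3 / N| *
      eucNorm (σ • (gaussBasis (n := m + 1) v B * Q).mulVec u - v) ≤ 32 * ε * K := by
  set Y := gaussBasis (n := m + 1) v B with hY
  set lam := ∑ i, v i ^ 4 - 3 / (N : ℝ)
  set e : Fin (m + 1) → ℝ := Pi.single 0 1 with he
  have hew : ∀ w : Fin (m + 1) → ℝ, e ⬝ᵥ w = w 0 := fun w => by simp [he]
  have hlead := hu.mulVec_of_orthogonal hQ
  set A := specMat Y - lam • Matrix.vecMulVec e e with hA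
  have hAq : ∀ w, w ⬝ᵥ A.mulVec w = w ⬝ᵥ (specMat Y).mulVec w - lam * (e ⬝ᵥ w) ^ 2 := by
    intro w
    rw [hA, Matrix.sub_mulVec, dotProduct_sub, Matrix.smul_mulVec, dotProduct_smul, smul_eq_mul]
    have : w ⬝ᵥ (Matrix.vecMulVec e e).mulVec w = (e ⬝ᵥ w) ^ 2 := by
      rw [Matrix.vecMulVec_mulVec]
      simp [dotProduct_comm w e, sq]
    rw [this]
  have hAs : Aᵀ = A := by
    rw [hA, Matrix.transpose_sub, specMat_transpose, Matrix.transpose_smul,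
      Matrix.transpose_vecMulVec]
  have hE := quadForm_le_of_net A hAs s hs hnet ε (fun w hw => by
    rw [hAq, hew]
    exact hε w hw)
  obtain ⟨σ, hσ, hσ2⟩ := leading_eigenvector_perturbation (specMat Y) (specMat_transpose Y) e
    (by rw [hew]; simp [he]) lam (2 * ε) (fun w => by rw [← hAq]; exact hE w) _ hlead
  refine ⟨σ, hσ, ?_⟩
  have hYe : Y.mulVec e = v := by
    ext i
    have : Y i ⬝ᵥ e = v i * e 0 + B i ⬝ᵥ Fin.tail e := rowCat_dotProduct _ _ _
    rw [Matrix.mulVec, this]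
    have ht : Fin.tail e = 0 := by
      ext j
      simp [Fin.tail, he]
    rw [ht]
    simp [he]
  have hdiff : σ • (Y * Q).mulVec u - v = Y.mulVec (σ • Q.mulVec u - e) := by
    rw [Matrix.mulVec_sub, hYe, Matrix.mulVec_smul, Matrix.mulVec_mulVec]
  have hop : ∀ z, eucNorm (Y.mulVec z) ≤ 2 * K * eucNorm z := by
    intro z
    have h1 := quadForm_le_of_net (Yᵀ * Y)
      (by rw [Matrix.transpose_mul, Matrix.transpose_transpose])
      s hs hnet (K ^ 2) (fun w hw => by
        rw [← mulVec_dotProduct_mulVec, abs_of_nonneg (by rw [← eucNorm_sq]; positivity)]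
        refine le_trans (le_of_eq ?_) (hK w hw)
        rw [dotProduct]
        refine Finset.sum_congr rfl fun i _ => ?_
        have : Y i ⬝ᵥ w = v i * w 0 + B i ⬝ᵥ Fin.tail w := rowCat_dotProduct _ _ _
        rw [Matrix.mulVec, this, sq]) z
    rw [← mulVec_dotProduct_mulVec, ← eucNorm_sq, ← eucNorm_sq] at h1
    refine abs_le_of_sq_le_sq' ?_ (by have := eucNorm_nonneg z; positivity) |>.2
    have := le_abs_self (eucNorm (Y.mulVec z) ^ 2)
    nlinarith [mul_nonneg (sq_nonneg K) (sq_nonneg (eucNorm z))]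
  rw [hdiff]
  calc |lam| * eucNorm (Y.mulVec (σ • Q.mulVec u - e))
      ≤ |lam| * (2 * K * eucNorm (σ • Q.mulVec u - e)) := by gcongr; exact hop _
    _ = 2 * K * (|lam| * eucNorm (σ • Q.mulVec u - e)) := by ring
    _ ≤ 2 * K * (8 * (2 * ε)) := by gcongr
    _ = 32 * ε * K := by ring

/-- The polynomial form of the error bracket, in the variables `p = √n`, `q = √(log (N/δ))`,
`R = 1/√N` and the norms of `v`. -/
noncomputable def etaPoly (p q R s₂ s₄ s₆ κ D : ℝ) : ℝ :=
  (s₂ + 1) * (p ^ 2 * q * R ^ 3) + s₄ * (p * q * R ^ 2) + s₆ * ((p + q) * R) +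
    κ ^ 2 * ((p ^ 2 * q ^ 2 + q ^ 4) * R ^ 2) + p ^ 3 * q ^ 3 * R ^ 4 + D * R ^ 2

/-- The constraints satisfied by the variables of `etaPoly`. -/
structure EtaVars (p q R s₂ s₄ s₆ κ D : ℝ) : Prop where
  one_le_p : 1 ≤ p
  one_le_q : 1 ≤ q
  R_pos : 0 < R
  q_R : q ^ 3 * R ≤ 1
  s₂_nonneg : 0 ≤ s₂
  s₄_nonneg : 0 ≤ s₄
  s₆_nonneg : 0 ≤ s₆
  κ_nonneg : 0 ≤ κ
  D_nonneg : 0 ≤ D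

namespace EtaVars

variable {p q R s₂ s₄ s₆ κ D : ℝ}

theorem sq_add_sq_le (h : EtaVars p q R s₂ s₄ s₆ κ D) : p ^ 2 + q ^ 2 ≤ 2 * (p ^ 2 * q ^ 2) := by
  have hp := one_le_pow₀ h.one_le_p (n := 2)
  have hq := one_le_pow₀ h.one_le_q (n := 2)
  nlinarith [mul_nonneg (sub_nonneg.2 hp) (sub_nonneg.2 hq)]

theorem components_nonneg (h : EtaVars p q R s₂ s₄ s₆ κ D) :
    0 ≤ p ^ 2 * q * R ^ 3 ∧ 0 ≤ s₂ * (p ^ 2 * q * R ^ 3) ∧ 0 ≤ s₄ * (p * q * R ^ 2) ∧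
      0 ≤ s₆ * ((p + q) * R) ∧ 0 ≤ κ ^ 2 * (p ^ 2 * q ^ 2 * R ^ 2) ∧ 0 ≤ κ ^ 2 * (q ^ 4 * R ^ 2) ∧
      0 ≤ p ^ 3 * q ^ 3 * R ^ 4 ∧ 0 ≤ D * R ^ 2 := by
  obtain ⟨hp, hq, hR, -, h2, h4, h6, hκ, hD⟩ := h
  have hp0 : 0 < p := by linarith
  have hq0 : 0 < q := by linarith
  refine ⟨?_, ?_, ?_, ?_, ?_, ?_, ?_, ?_⟩ <;> positivity

theorem etaPoly_eq : etaPoly p q R s₂ s₄ s₆ κ D =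
    p ^ 2 * q * R ^ 3 + s₂ * (p ^ 2 * q * R ^ 3) + s₄ * (p * q * R ^ 2) + s₆ * ((p + q) * R) +
      κ ^ 2 * (p ^ 2 * q ^ 2 * R ^ 2) + κ ^ 2 * (q ^ 4 * R ^ 2) + p ^ 3 * q ^ 3 * R ^ 4 +
      D * R ^ 2 := by
  rw [etaPoly]
  ring

theorem sq_mul_sq_le (h : EtaVars p q R s₂ s₄ s₆ κ D) :
    p ^ 2 * q ^ 2 * R ^ 4 ≤ p ^ 3 * q ^ 3 * R ^ 4 := by
  have := h.R_pos
  have hp : 0 < p := by linarith [h.one_le_p]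
  have hq : 0 < q := by linarith [h.one_le_q]
  have h1 := pow_le_pow_right₀ h.one_le_p (show 2 ≤ 3 by norm_num)
  have h2 := pow_le_pow_right₀ h.one_le_q (show 2 ≤ 3 by norm_num)
  gcongr

theorem pow_four_le (h : EtaVars p q R s₂ s₄ s₆ κ D) : q ^ 4 * R ^ 4 ≤ p ^ 2 * q * R ^ 3 := by
  have hR := h.R_pos
  have hq : 0 < q := by linarith [h.one_le_q]
  calc q ^ 4 * R ^ 4 = (q ^ 3 * R) * (q * R ^ 3) := by ring
    _ ≤ 1 * (q * R ^ 3) := by gcongr; exact h.q_R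
    _ ≤ p ^ 2 * (q * R ^ 3) := by gcongr; exact one_le_pow₀ h.one_le_p
    _ = _ := by ring

theorem diag_threshold_le (h : EtaVars p q R s₂ s₄ s₆ κ D) :
    2 * (√(2 * p ^ 2 * R ^ 4 * s₄ ^ 2 * (2 * q ^ 2)) + (4 * κ ^ 2 * R ^ 2 + R ^ 4) * (2 * q ^ 2)) ≤
      10000 * etaPoly p q R s₂ s₄ s₆ κ D := by
  obtain ⟨c1, c2, c3, c4, c5, c6, c7, c8⟩ := h.components_nonneg
  have e1 : √(2 * p ^ 2 * R ^ 4 * s₄ ^ 2 * (2 * q ^ 2)) ≤ 2 * (s₄ * (p * q * R ^ 2)) :=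
    Real.sqrt_le_iff.2 ⟨by linarith, le_of_eq (by ring)⟩
  have hR := h.R_pos
  have hp2 := one_le_pow₀ h.one_le_p (n := 2)
  have e2 : κ ^ 2 * (q ^ 2 * R ^ 2) ≤ κ ^ 2 * (p ^ 2 * q ^ 2 * R ^ 2) := by
    gcongr
    exact le_mul_of_one_le_left (sq_nonneg q) hp2
  have e3 : q ^ 2 * R ^ 4 ≤ p ^ 2 * q ^ 2 * R ^ 4 := by
    gcongr
    exact le_mul_of_one_le_left (sq_nonneg q) hp2
  have e4 := h.sq_mul_sq_le
  rw [etaPoly_eq]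
  linarith

theorem cubic_threshold_le (h : EtaVars p q R s₂ s₄ s₆ κ D) :
    2 * (√(R ^ 2 / 2 * s₆ ^ 2 * (2 * (p ^ 2 + q ^ 2))) + R ^ 4 * (2 * (p ^ 2 + q ^ 2))) ≤
      10000 * etaPoly p q R s₂ s₄ s₆ κ D := by
  obtain ⟨c1, c2, c3, c4, c5, c6, c7, c8⟩ := h.components_nonneg
  have hR := h.R_pos
  have hp := h.one_le_p
  have hq := h.one_le_q
  have e1 : √(R ^ 2 / 2 * s₆ ^ 2 * (2 * (p ^ 2 + q ^ 2))) ≤ s₆ * ((p + q) * R) := by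
    refine Real.sqrt_le_iff.2 ⟨c4, ?_⟩
    have : 0 ≤ 2 * (p * q) * (s₆ * R) ^ 2 := by positivity
    nlinarith
  have e2 := mul_le_mul_of_nonneg_left h.sq_add_sq_le (by positivity : 0 ≤ R ^ 4)
  have e4 := h.sq_mul_sq_le
  rw [etaPoly_eq]
  linarith

theorem mixed_threshold_le_of_le (h : EtaVars p q R s₂ s₄ s₆ κ D) (hqp : q ≤ p) :
    2 * (√((32 * (p * q + q ^ 2) * R ^ 2) ^ 2 * (R ^ 2 / 2) * s₂ ^ 2 * (2 * (p ^ 2 + q ^ 2))) +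
      R ^ 4 * (2 * (p ^ 2 + q ^ 2))) ≤ 10000 * etaPoly p q R s₂ s₄ s₆ κ D := by
  obtain ⟨c1, c2, c3, c4, c5, c6, c7, c8⟩ := h.components_nonneg
  have hR := h.R_pos
  have hp := h.one_le_p
  have hq := h.one_le_q
  have hs := h.s₂_nonneg
  have e1 : √((32 * (p * q + q ^ 2) * R ^ 2) ^ 2 * (R ^ 2 / 2) * s₂ ^ 2 * (2 * (p ^ 2 + q ^ 2))) ≤
      128 * (s₂ * (p ^ 2 * q * R ^ 3)) := by
    refine Real.sqrt_le_iff.2 ⟨by linarith, ?_⟩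
    calc (32 * (p * q + q ^ 2) * R ^ 2) ^ 2 * (R ^ 2 / 2) * s₂ ^ 2 * (2 * (p ^ 2 + q ^ 2))
        ≤ (32 * (p * q + p * q) * R ^ 2) ^ 2 * (R ^ 2 / 2) * s₂ ^ 2 * (2 * (p ^ 2 + p ^ 2)) := by
          gcongr
          nlinarith
      _ ≤ _ := by
          have : 0 ≤ (s₂ * (p ^ 2 * q * R ^ 3)) ^ 2 := sq_nonneg _
          nlinarith
  have e2 := mul_le_mul_of_nonneg_left h.sq_add_sq_le (by positivity : 0 ≤ R ^ 4)
  have e4 := h.sq_mul_sq_le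
  rw [etaPoly_eq]
  linarith

theorem mixed_threshold_le_of_ge (h : EtaVars p q R s₂ s₄ s₆ κ D) (hpq : p ≤ q) :
    2 * (√(600000 * p ^ 2 * R ^ 6 * s₂ ^ 2 * (2 * (p ^ 2 + q ^ 2))) +
      (κ * (4 * (32 * (p * q + q ^ 2) * R ^ 2 * R)) + R ^ 4) * (2 * (p ^ 2 + q ^ 2))) ≤
      10000 * etaPoly p q R s₂ s₄ s₆ κ D := by
  obtain ⟨c1, c2, c3, c4, c5, c6, c7, c8⟩ := h.components_nonneg
  have hR := h.R_pos
  have hp := h.one_le_p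
  have hq := h.one_le_q
  have hs := h.s₂_nonneg
  have hκ := h.κ_nonneg
  have e1 : √(600000 * p ^ 2 * R ^ 6 * s₂ ^ 2 * (2 * (p ^ 2 + q ^ 2))) ≤
      1550 * (s₂ * (p ^ 2 * q * R ^ 3)) := by
    refine Real.sqrt_le_iff.2 ⟨by linarith, ?_⟩
    calc 600000 * p ^ 2 * R ^ 6 * s₂ ^ 2 * (2 * (p ^ 2 + q ^ 2))
        ≤ 600000 * p ^ 2 * R ^ 6 * s₂ ^ 2 * (2 * (2 * (p ^ 2 * q ^ 2))) := by
          gcongr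
          exact h.sq_add_sq_le
      _ ≤ _ := by
          have : 0 ≤ (s₂ * (p ^ 2 * q * R ^ 3)) ^ 2 := sq_nonneg _
          nlinarith
  have e2 := mul_le_mul_of_nonneg_left h.sq_add_sq_le (by positivity : 0 ≤ R ^ 4)
  have e3 : κ * (4 * (32 * (p * q + q ^ 2) * R ^ 2 * R)) * (2 * (p ^ 2 + q ^ 2)) ≤
      1024 * (κ * (q ^ 4 * R ^ 3)) := by
    calc κ * (4 * (32 * (p * q + q ^ 2) * R ^ 2 * R)) * (2 * (p ^ 2 + q ^ 2))
        ≤ κ * (4 * (32 * (q * q + q ^ 2) * R ^ 2 * R)) * (2 * (q ^ 2 + q ^ 2)) := by gcongr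
      _ = _ := by ring
  have e5 : 2 * (κ * (q ^ 4 * R ^ 3)) ≤ κ ^ 2 * (q ^ 4 * R ^ 2) + q ^ 4 * R ^ 4 := by
    nlinarith [sq_nonneg (κ * (q ^ 2 * R) - q ^ 2 * R ^ 2)]
  have e6 := h.pow_four_le
  have e4 := h.sq_mul_sq_le
  rw [etaPoly_eq]
  linarith

theorem quadratic_threshold_le (h : EtaVars p q R s₂ s₄ s₆ κ D) :
    2 * (√(2 * R ^ 4 * s₄ ^ 2 * (2 * (p ^ 2 + q ^ 2))) +
      (4 * κ ^ 2 * R ^ 2 + R ^ 4) * (2 * (p ^ 2 + q ^ 2))) ≤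
      10000 * etaPoly p q R s₂ s₄ s₆ κ D := by
  obtain ⟨c1, c2, c3, c4, c5, c6, c7, c8⟩ := h.components_nonneg
  have hR := h.R_pos
  have hp := h.one_le_p
  have hq := h.one_le_q
  have e1 : √(2 * R ^ 4 * s₄ ^ 2 * (2 * (p ^ 2 + q ^ 2))) ≤ 3 * (s₄ * (p * q * R ^ 2)) := by
    refine Real.sqrt_le_iff.2 ⟨by linarith, ?_⟩
    calc 2 * R ^ 4 * s₄ ^ 2 * (2 * (p ^ 2 + q ^ 2))
        ≤ 2 * R ^ 4 * s₄ ^ 2 * (2 * (2 * (p ^ 2 * q ^ 2))) := by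
          gcongr
          exact h.sq_add_sq_le
      _ ≤ _ := by
          have : 0 ≤ (s₄ * (p * q * R ^ 2)) ^ 2 := sq_nonneg _
          nlinarith
  have e2 := mul_le_mul_of_nonneg_left h.sq_add_sq_le (by positivity : 0 ≤ R ^ 4)
  have e3 := mul_le_mul_of_nonneg_left h.sq_add_sq_le (by positivity : 0 ≤ κ ^ 2 * R ^ 2)
  have e4 := h.sq_mul_sq_le
  rw [etaPoly_eq]
  linarith

theorem quartic_threshold_le (h : EtaVars p q R s₂ s₄ s₆ κ D) :
    2 * (√(300000 * p ^ 2 * R ^ 6 * (2 * (p ^ 2 + q ^ 2))) +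
      (16 * (32 * (p * q + q ^ 2) * R ^ 2 * R ^ 2) + R ^ 4) * (2 * (p ^ 2 + q ^ 2))) ≤
      10000 * etaPoly p q R s₂ s₄ s₆ κ D := by
  obtain ⟨c1, c2, c3, c4, c5, c6, c7, c8⟩ := h.components_nonneg
  have hR := h.R_pos
  have hp := h.one_le_p
  have hq := h.one_le_q
  have e1 : √(300000 * p ^ 2 * R ^ 6 * (2 * (p ^ 2 + q ^ 2))) ≤ 1100 * (p ^ 2 * q * R ^ 3) := by
    refine Real.sqrt_le_iff.2 ⟨by linarith, ?_⟩
    calc 300000 * p ^ 2 * R ^ 6 * (2 * (p ^ 2 + q ^ 2))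
        ≤ 300000 * p ^ 2 * R ^ 6 * (2 * (2 * (p ^ 2 * q ^ 2))) := by
          gcongr
          exact h.sq_add_sq_le
      _ ≤ _ := by
          have : 0 ≤ (p ^ 2 * q * R ^ 3) ^ 2 := sq_nonneg _
          nlinarith
  have e2 := mul_le_mul_of_nonneg_left h.sq_add_sq_le (by positivity : 0 ≤ R ^ 4)
  have e4 := h.sq_mul_sq_le
  have e6 := h.pow_four_le
  have f1 : p ^ 3 * q * R ^ 4 ≤ p ^ 3 * q ^ 3 * R ^ 4 := by
    gcongr
    exact le_self_pow₀ hq (by norm_num)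
  have f2 : p * q ^ 3 * R ^ 4 ≤ p ^ 3 * q ^ 3 * R ^ 4 := by
    gcongr
    exact le_self_pow₀ hp (by norm_num)
  have e3 : 16 * (32 * (p * q + q ^ 2) * R ^ 2 * R ^ 2) * (2 * (p ^ 2 + q ^ 2)) =
      1024 * (p ^ 3 * q * R ^ 4 + p ^ 2 * q ^ 2 * R ^ 4 + p * q ^ 3 * R ^ 4 + q ^ 4 * R ^ 4) := by
    ring
  rw [etaPoly_eq, add_mul, e3]
  linarith

theorem bias_le (h : EtaVars p q R s₂ s₄ s₆ κ D) :
    300000 * p ^ 2 * R ^ 4 + 2 * R ^ 4 ≤ 400000 * etaPoly p q R s₂ s₄ s₆ κ D := by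
  obtain ⟨c1, c2, c3, c4, c5, c6, c7, c8⟩ := h.components_nonneg
  have hR := h.R_pos
  have hp2 := one_le_pow₀ h.one_le_p (n := 2)
  have hq2 := one_le_pow₀ h.one_le_q (n := 2)
  have e4 := h.sq_mul_sq_le
  have f1 : p ^ 2 * R ^ 4 ≤ p ^ 2 * q ^ 2 * R ^ 4 := by
    gcongr
    exact le_mul_of_one_le_right (sq_nonneg p) hq2
  have f2 : R ^ 4 ≤ p ^ 2 * R ^ 4 := le_mul_of_one_le_left (by positivity) hp2
  rw [etaPoly_eq]
  linarith

theorem quadForm_error_le (h : EtaVars p q R s₂ s₄ s₆ κ D) {a y D' X₁ X₂ X₃ X₄ X₅ β : ℝ}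
    (ha : a ^ 2 ≤ 1) (hy0 : 0 ≤ y) (hy : y ≤ 1) (hD : |D'| ≤ D)
    (h1 : |X₁| ≤ 10000 * etaPoly p q R s₂ s₄ s₆ κ D)
    (h2 : |X₂| ≤ 10000 * etaPoly p q R s₂ s₄ s₆ κ D)
    (h3 : |X₃| ≤ 10000 * etaPoly p q R s₂ s₄ s₆ κ D)
    (h4 : |X₄| ≤ 10000 * etaPoly p q R s₂ s₄ s₆ κ D)
    (h5 : |X₅| ≤ 10000 * etaPoly p q R s₂ s₄ s₆ κ D)
    (hβ : |β| ≤ 400000 * etaPoly p q R s₂ s₄ s₆ κ D) :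
    |a ^ 2 * X₁ + 2 * a * X₂ + 2 * a * X₃ + X₄ + (X₅ + β) + D' * R ^ 2 * y| ≤
      500000 * etaPoly p q R s₂ s₄ s₆ κ D := by
  obtain ⟨c1, c2, c3, c4, c5, c6, c7, c8⟩ := h.components_nonneg
  have hDe : D * R ^ 2 ≤ etaPoly p q R s₂ s₄ s₆ κ D := by
    rw [etaPoly_eq]
    linarith
  set E := etaPoly p q R s₂ s₄ s₆ κ D
  have ha' : |a| ≤ 1 := abs_le_one_iff_mul_self_le_one.2 (by nlinarith)
  have g1 : |a ^ 2 * X₁| ≤ 10000 * E := by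
    rw [abs_mul, abs_of_nonneg (sq_nonneg a)]
    nlinarith [abs_nonneg X₁]
  have g2 : ∀ X : ℝ, |X| ≤ 10000 * E → |2 * a * X| ≤ 20000 * E := by
    intro X hX
    rw [abs_mul, abs_mul, abs_two]
    nlinarith [abs_nonneg X, abs_nonneg a]
  have g3 : |D' * R ^ 2 * y| ≤ E := by
    rw [abs_mul, abs_mul, abs_of_nonneg (sq_nonneg R), abs_of_nonneg hy0]
    calc |D'| * R ^ 2 * y ≤ D * R ^ 2 * 1 := by gcongr
      _ ≤ E := by linarith
  have g4 := g2 X₂ h2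
  have g5 := g2 X₃ h3
  rw [abs_le] at *
  constructor <;> linarith [g1.1, g1.2, g3.1, g3.2, g4.1, g4.2, g5.1, g5.2, h4.1, h4.2, h5.1, h5.2,
    hβ.1, hβ.2]

end EtaVars

instance isProbabilityMeasure_iidGaussVec (N k : ℕ) (σ2 : NNReal) :
    IsProbabilityMeasure (iidGaussVec N k σ2) := by
  unfold iidGaussVec
  infer_instance

/-- A version of `IsSubGamma.weighted_sum_tail` with a prescribed threshold. -/
theorem IsSubGamma.weighted_sum_tail_le {Ω : Type*} [MeasurableSpace Ω] {μ : Measure Ω}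
    [IsProbabilityMeasure μ] {Z : Ω → ℝ} {m τ ρ : ℝ} (h : IsSubGamma μ Z m τ ρ) (hρ : 0 ≤ ρ)
    (hτ : 0 ≤ τ) {N : ℕ} {c : Fin N → ℝ} {κ R T S t : ℝ} (hc : ∀ i, |c i| ≤ κ) (hR : κ * ρ ≤ R)
    (hR0 : 0 < R) (hT : 0 < T) (hS : ∑ i, c i ^ 2 = S) (ht : 2 * (√(τ * S * T) + R * T) ≤ t) :
    (Measure.pi fun _ : Fin N => μ).real {ω | t < |∑ i, c i * (Z (ω i) - m)|} ≤
      2 * Real.exp (-T) := by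
  refine le_trans (measureReal_mono (fun ω hω => ?_)) (h.weighted_sum_tail hρ hτ c hc hR hR0 hT)
  have h' : t < |∑ i, c i * (Z (ω i) - m)| := hω
  have : 2 * (√(τ * (∑ i, c i ^ 2) * T) + R * T) < |∑ i, c i * (Z (ω i) - m)| := by
    rw [hS]
    linarith
  exact this

/-- The variables of `etaPoly` attached to a vector `v ∈ ℝ^N` and a Gaussian block with
`m = n - 1` columns. -/
structure GaussBasisVars (N m : ℕ) (v : Fin N → ℝ) (p q R s₂ s₄ s₆ κ D : ℝ) : Prop extends
    EtaVars p q R s₂ s₄ s₆ κ D where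
  p_sq : p ^ 2 = m + 1
  R_sq : R ^ 2 = (N : ℝ)⁻¹
  s₂_sq : s₂ ^ 2 = ∑ i, v i ^ 2
  s₄_sq : s₄ ^ 2 = ∑ i, v i ^ 4
  s₆_sq : s₆ ^ 2 = ∑ i, v i ^ 6
  abs_le : ∀ i, |v i| ≤ κ
  abs_sub_one_le : |∑ i, v i ^ 2 - 1| ≤ D

/-- The level at which the row deviations are truncated. -/
noncomputable def truncLevel (p q R : ℝ) : ℝ := 32 * (p * q + q ^ 2) * R ^ 2

namespace GaussBasisVars

variable {N m : ℕ} {v : Fin N → ℝ} {p q R s₂ s₄ s₆ κ D : ℝ}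

theorem coe_inv (h : GaussBasisVars N m v p q R s₂ s₄ s₆ κ D) :
    (((N : NNReal)⁻¹ : NNReal) : ℝ) = R ^ 2 := by
  rw [h.R_sq]
  simp

theorem N_pos (h : GaussBasisVars N m v p q R s₂ s₄ s₆ κ D) : (0 : ℝ) < N := by
  have := h.R_sq ▸ pow_pos h.R_pos 2
  exact inv_pos.1 this

theorem inv_ne_zero (h : GaussBasisVars N m v p q R s₂ s₄ s₆ κ D) :
    (N : NNReal)⁻¹ ≠ 0 := by
  have := h.N_pos
  rw [ne_eq, inv_eq_zero]
  exact_mod_cast this.ne'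

theorem truncLevel_nonneg (h : GaussBasisVars N m v p q R s₂ s₄ s₆ κ D) : 0 ≤ truncLevel p q R := by
  have := h.one_le_p
  have := h.one_le_q
  rw [truncLevel]
  positivity

theorem sqDev_tail (h : GaussBasisVars N m v p q R s₂ s₄ s₆ κ D) :
    (gaussVec m (N : NNReal)⁻¹).real {b | truncLevel p q R < |sqDev m (N : NNReal)⁻¹ b|} ≤
      2 * Real.exp (-(4 * q ^ 2)) := by
  have hp := h.one_le_p
  have hq := h.one_le_q
  have hR := h.R_pos
  refine le_trans (measureReal_mono (fun b hb => ?_)) ((isSubGamma_sqDev m (N : NNReal)⁻¹).tail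
    (by positivity) (by rw [h.coe_inv]; positivity) (by positivity : 0 < 4 * q ^ 2))
  refine lt_of_le_of_lt (b := truncLevel p q R) ?_ hb
  rw [h.coe_inv, truncLevel]
  have hm : (m : ℝ) ≤ p ^ 2 := by linarith [h.p_sq]
  have e1 : √(2 * m * (R ^ 2) ^ 2 * (4 * q ^ 2)) ≤ 3 * (p * q * R ^ 2) := by
    refine Real.sqrt_le_iff.2 ⟨by positivity, ?_⟩
    have := mul_le_mul_of_nonneg_right hm (by positivity : 0 ≤ R ^ 4 * q ^ 2)
    nlinarith [sq_nonneg (p * q * R ^ 2)]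
  have : 0 ≤ p * q * R ^ 2 := by positivity
  nlinarith

theorem diag_tail (h : GaussBasisVars N m v p q R s₂ s₄ s₆ κ D) :
    (iidGaussVec N m (N : NNReal)⁻¹).real {B | 10000 * etaPoly p q R s₂ s₄ s₆ κ D <
      |∑ i, v i ^ 2 * sqDev m (N : NNReal)⁻¹ (B i)|} ≤ 2 * Real.exp (-(2 * q ^ 2)) := by
  have hp := h.one_le_p
  have hq := h.one_le_q
  have hR := h.R_pos
  have hm : (m : ℝ) ≤ p ^ 2 := by linarith [h.p_sq]
  have h0 : IsSubGamma (gaussVec m (N : NNReal)⁻¹) (sqDev m (N : NNReal)⁻¹) 0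
      (2 * p ^ 2 * R ^ 4) (4 * R ^ 2) := by
    have := (isSubGamma_sqDev m (N : NNReal)⁻¹).congr_fun (τ' := 2 * p ^ 2 * R ^ 4)
      (fun _ => rfl) (by rw [h.coe_inv, ← pow_mul]; gcongr)
    rwa [h.coe_inv] at this
  have h1 := h0.weighted_sum_tail_le (by positivity) (by positivity) (c := fun i => v i ^ 2)
    (κ := κ ^ 2) (R := 4 * κ ^ 2 * R ^ 2 + R ^ 4) (T := 2 * q ^ 2) (S := s₄ ^ 2)
    (fun i => by rw [abs_pow]; exact pow_le_pow_left₀ (abs_nonneg _) (h.abs_le i) 2)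
    (by nlinarith [pow_pos hR 4]) (by positivity) (by positivity)
    (by rw [h.s₄_sq]; exact Finset.sum_congr rfl fun i _ => by ring) h.diag_threshold_le
  simpa only [sub_zero, iidGaussVec] using h1

theorem cubic_tail (h : GaussBasisVars N m v p q R s₂ s₄ s₆ κ D) {x : Fin m → ℝ} (hx : x ⬝ᵥ x ≤ 1) :
    (iidGaussVec N m (N : NNReal)⁻¹).real {B | 10000 * etaPoly p q R s₂ s₄ s₆ κ D <
      |∑ i, v i ^ 3 * (B i ⬝ᵥ x)|} ≤ 2 * Real.exp (-(2 * (p ^ 2 + q ^ 2))) := by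
  have hp := h.one_le_p
  have hq := h.one_le_q
  have hR := h.R_pos
  have h0 := isSubGamma_dotProduct m (N : NNReal)⁻¹ x hx
  rw [h.coe_inv] at h0
  have h1 := h0.weighted_sum_tail_le le_rfl (by positivity) (c := fun i => v i ^ 3)
    (κ := κ ^ 3) (R := R ^ 4) (T := 2 * (p ^ 2 + q ^ 2)) (S := s₆ ^ 2)
    (fun i => by rw [abs_pow]; exact pow_le_pow_left₀ (abs_nonneg _) (h.abs_le i) 3)
    (by rw [mul_zero]; positivity) (by positivity) (by positivity)
    (by rw [h.s₆_sq]; exact Finset.sum_congr rfl fun i _ => by ring) h.cubic_threshold_le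
  simpa only [sub_zero, iidGaussVec] using h1

theorem mixed_tail (h : GaussBasisVars N m v p q R s₂ s₄ s₆ κ D) {x : Fin m → ℝ} (hx : x ⬝ᵥ x ≤ 1) :
    (iidGaussVec N m (N : NNReal)⁻¹).real {B | 10000 * etaPoly p q R s₂ s₄ s₆ κ D <
      |∑ i, v i * (truncDev m (N : NNReal)⁻¹ (truncLevel p q R) (B i) * (B i ⬝ᵥ x))|} ≤
      2 * Real.exp (-(2 * (p ^ 2 + q ^ 2))) := by
  have hp := h.one_le_p
  have hq := h.one_le_q
  have hR := h.R_pos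
  have hκ := h.κ_nonneg
  have hG := h.truncLevel_nonneg
  rcases le_total q p with hqp | hpq
  · have h0 := isSubGamma_truncDev_mul_dotProduct m (N : NNReal)⁻¹ hG x hx
    rw [h.coe_inv] at h0
    have h1 := h0.weighted_sum_tail_le le_rfl (by positivity) (c := v)
      (κ := κ) (R := R ^ 4) (T := 2 * (p ^ 2 + q ^ 2)) (S := s₂ ^ 2) h.abs_le
      (by rw [mul_zero]; positivity) (by positivity) (by positivity) h.s₂_sq.symm
      (h.mixed_threshold_le_of_le hqp)
    simpa only [sub_zero, iidGaussVec] using h1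
  · have h0 := isSubGamma_truncDev_mul_dotProduct_of_moment h.inv_ne_zero (n := p ^ 2)
      (one_le_pow₀ hp) (by linarith [h.p_sq]) hG x hx
    rw [h.coe_inv, Real.sqrt_sq hR.le, ← pow_mul] at h0
    have h1 := h0.weighted_sum_tail_le (by positivity) (by positivity) (c := v)
      (κ := κ) (R := κ * (4 * (truncLevel p q R * R)) + R ^ 4) (T := 2 * (p ^ 2 + q ^ 2))
      (S := s₂ ^ 2) h.abs_le
      (by linarith [pow_pos hR 4]) (by positivity) (by positivity) h.s₂_sq.symm
      (h.mixed_threshold_le_of_ge hpq)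
    simpa only [sub_zero, iidGaussVec] using h1

theorem isSubGamma_dotProduct_sq (h : GaussBasisVars N m v p q R s₂ s₄ s₆ κ D) {x : Fin m → ℝ}
    (hx : x ⬝ᵥ x ≤ 1) : IsSubGamma (gaussVec m (N : NNReal)⁻¹) (fun b => (b ⬝ᵥ x) ^ 2)
      ((N : ℝ)⁻¹ * (x ⬝ᵥ x)) (2 * R ^ 4) (4 * R ^ 2) := by
  have h0 := _root_.isSubGamma_dotProduct_sq m (N : NNReal)⁻¹ x hx
  rw [h.coe_inv, ← pow_mul, h.R_sq] at h0
  rw [h.R_sq]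
  exact h0

theorem quadratic_tail (h : GaussBasisVars N m v p q R s₂ s₄ s₆ κ D) {x : Fin m → ℝ}
    (hx : x ⬝ᵥ x ≤ 1) :
    (iidGaussVec N m (N : NNReal)⁻¹).real {B | 10000 * etaPoly p q R s₂ s₄ s₆ κ D <
      |∑ i, v i ^ 2 * ((B i ⬝ᵥ x) ^ 2 - (N : ℝ)⁻¹ * (x ⬝ᵥ x))|} ≤
      2 * Real.exp (-(2 * (p ^ 2 + q ^ 2))) := by
  have hp := h.one_le_p
  have hq := h.one_le_q
  have hR := h.R_pos
  exact (h.isSubGamma_dotProduct_sq hx).weighted_sum_tail_le (by positivity) (by positivity)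
    (c := fun i => v i ^ 2)
    (κ := κ ^ 2) (R := 4 * κ ^ 2 * R ^ 2 + R ^ 4) (T := 2 * (p ^ 2 + q ^ 2)) (S := s₄ ^ 2)
    (fun i => by rw [abs_pow]; exact pow_le_pow_left₀ (abs_nonneg _) (h.abs_le i) 2)
    (by nlinarith [pow_pos hR 4]) (by positivity) (by positivity)
    (by rw [h.s₄_sq]; exact Finset.sum_congr rfl fun i _ => by ring) h.quadratic_threshold_le

theorem quartic_tail (h : GaussBasisVars N m v p q R s₂ s₄ s₆ κ D) {x : Fin m → ℝ}
    (hx : x ⬝ᵥ x ≤ 1) :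
    (iidGaussVec N m (N : NNReal)⁻¹).real {B | 10000 * etaPoly p q R s₂ s₄ s₆ κ D <
      |∑ i, (truncDev m (N : NNReal)⁻¹ (truncLevel p q R) (B i) * (B i ⬝ᵥ x) ^ 2 -
        ∫ b, truncDev m (N : NNReal)⁻¹ (truncLevel p q R) b * (b ⬝ᵥ x) ^ 2
          ∂gaussVec m (N : NNReal)⁻¹)|} ≤ 2 * Real.exp (-(2 * (p ^ 2 + q ^ 2))) := by
  have hp := h.one_le_p
  have hq := h.one_le_q
  have hR := h.R_pos
  have hG := h.truncLevel_nonneg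
  have hN := h.N_pos
  have h0 := isSubGamma_truncDev_mul_dotProduct_sq h.inv_ne_zero (n := p ^ 2)
    (one_le_pow₀ hp) (by linarith [h.p_sq]) hG x hx
  rw [h.coe_inv, ← pow_mul] at h0
  have h1 := h0.weighted_sum_tail_le (by positivity) (by positivity) (c := fun _ : Fin N => (1 : ℝ))
    (κ := 1) (R := 16 * (truncLevel p q R * R ^ 2) + R ^ 4) (T := 2 * (p ^ 2 + q ^ 2)) (S := N)
    (t := 10000 * etaPoly p q R s₂ s₄ s₆ κ D)
    (fun i => by rw [abs_one]) (by linarith [pow_pos hR 4]) (by positivity) (by positivity)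
    (by simp) (by
      have e : 300000 * p ^ 2 * R ^ (2 * 4) * N = 300000 * p ^ 2 * R ^ 6 := by
        have : R ^ 2 * N = 1 := by rw [h.R_sq, inv_mul_cancel₀ hN.ne']
        linear_combination 300000 * p ^ 2 * R ^ 6 * this
      rw [e]
      exact h.quartic_threshold_le)
  simpa only [one_mul, iidGaussVec] using h1

theorem sum_sq_tail (h : GaussBasisVars N m v p q R s₂ s₄ s₆ κ D) (hmN : m + 1 ≤ N)
    {x : Fin m → ℝ} (hx : x ⬝ᵥ x ≤ 1) :
    (iidGaussVec N m (N : NNReal)⁻¹).real {B | 39 < ∑ i, (B i ⬝ᵥ x) ^ 2} ≤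
      2 * Real.exp (-(2 * (p ^ 2 + q ^ 2))) := by
  have hp := h.one_le_p
  have hq := h.one_le_q
  have hR := h.R_pos
  have hN := h.N_pos
  have hRN : R ^ 2 * N = 1 := by rw [h.R_sq, inv_mul_cancel₀ hN.ne']
  have hT : R ^ 2 * (2 * (p ^ 2 + q ^ 2)) ≤ 4 := by
    have h1 : p ^ 2 ≤ N := by
      rw [h.p_sq]
      exact_mod_cast hmN
    have h2 : (q ^ 3 * R) ^ 2 ≤ 1 := pow_le_one₀ (by positivity) h.q_R
    have h3 : q ^ 2 * R ^ 2 ≤ 1 := by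
      refine le_trans ?_ h2
      rw [mul_pow, ← pow_mul]
      gcongr ?_ * R ^ 2
      exact pow_le_pow_right₀ hq (by norm_num)
    have h4 := mul_le_mul_of_nonneg_left h1 (sq_nonneg R)
    nlinarith
  have h1 := (h.isSubGamma_dotProduct_sq hx).weighted_sum_tail_le (by positivity) (by positivity)
    (c := fun _ : Fin N => (1 : ℝ)) (κ := 1) (R := 4 * R ^ 2) (T := 2 * (p ^ 2 + q ^ 2)) (S := N)
    (t := 38) (fun i => by rw [abs_one]) (by rw [one_mul]) (by positivity) (by positivity)
    (by simp) (by
      have : √(2 * R ^ 4 * N * (2 * (p ^ 2 + q ^ 2))) ≤ 3 := by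
        refine Real.sqrt_le_iff.2 ⟨by norm_num, ?_⟩
        calc 2 * R ^ 4 * N * (2 * (p ^ 2 + q ^ 2))
            = 2 * (R ^ 2 * N) * (R ^ 2 * (2 * (p ^ 2 + q ^ 2))) := by ring
          _ ≤ _ := by
            rw [hRN]
            linarith
      linarith)
  refine le_trans (measureReal_mono (fun B hB => ?_)) h1
  have hB' : 39 < ∑ i, (B i ⬝ᵥ x) ^ 2 := hB
  have e : ∑ i, (1 : ℝ) * ((B i ⬝ᵥ x) ^ 2 - (N : ℝ)⁻¹ * (x ⬝ᵥ x)) =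
      ∑ i, (B i ⬝ᵥ x) ^ 2 - x ⬝ᵥ x := by
    simp only [one_mul, Finset.sum_sub_distrib, Finset.sum_const, Finset.card_univ,
      Fintype.card_fin, nsmul_eq_mul]
    rw [mul_inv_cancel_left₀ hN.ne']
  have : (38 : ℝ) < |∑ i, (1 : ℝ) * ((B i ⬝ᵥ x) ^ 2 - (N : ℝ)⁻¹ * (x ⬝ᵥ x))| := by
    rw [e]
    exact lt_of_lt_of_le (by linarith) (le_abs_self _)
  exact this

end GaussBasisVars

namespace GaussBasisVars

variable {N m : ℕ} {v : Fin N → ℝ} {p q R s₂ s₄ s₆ κ D : ℝ}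

theorem exists_row_tail (h : GaussBasisVars N m v p q R s₂ s₄ s₆ κ D) :
    (iidGaussVec N m (N : NNReal)⁻¹).real
      {B | ∃ i, truncLevel p q R < |sqDev m (N : NNReal)⁻¹ (B i)|} ≤
      N * (2 * Real.exp (-(4 * q ^ 2))) := by
  have hset : {B : Fin N → Fin m → ℝ | ∃ i, truncLevel p q R < |sqDev m (N : NNReal)⁻¹ (B i)|} =
      ⋃ i ∈ (Finset.univ : Finset (Fin N)),
        {B | truncLevel p q R < |sqDev m (N : NNReal)⁻¹ (B i)|} := by
    ext B
    simp
  rw [hset]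
  refine (measureReal_biUnion_finset_le _ _).trans ?_
  refine (Finset.sum_le_card_nsmul _ _ _ fun i _ => ?_).trans_eq (by
    rw [Finset.card_univ, Fintype.card_fin, nsmul_eq_mul])
  refine le_trans (le_of_eq ?_) h.sqDev_tail
  have hmeas : MeasurableSet {b | truncLevel p q R < |sqDev m (N : NNReal)⁻¹ b|} :=
    measurableSet_lt measurable_const (measurable_sqDev m _).abs
  rw [iidGaussVec]
  exact (measurePreserving_eval (fun _ : Fin N => gaussVec m (N : NNReal)⁻¹) i).measureReal_preimage
    hmeas.nullMeasurableSet

theorem abs_bias_le (h : GaussBasisVars N m v p q R s₂ s₄ s₆ κ D)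
    (hexp : Real.exp (-q ^ 2) ≤ R ^ 2) {x : Fin m → ℝ} (hx : x ⬝ᵥ x ≤ 1) :
    |N * ∫ b, truncDev m (N : NNReal)⁻¹ (truncLevel p q R) b * (b ⬝ᵥ x) ^ 2
        ∂gaussVec m (N : NNReal)⁻¹ - 2 * (N : ℝ)⁻¹ * (x ⬝ᵥ x)| ≤
      400000 * etaPoly p q R s₂ s₄ s₆ κ D := by
  have hN := h.N_pos
  have hR := h.R_pos
  have hRN : (N : ℝ) * R ^ 2 = 1 := by rw [h.R_sq, mul_inv_cancel₀ hN.ne']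
  have h0 := abs_integral_truncDev_sub_le h.inv_ne_zero (n := p ^ 2) (G := truncLevel p q R)
    (one_le_pow₀ h.one_le_p) (by linarith [h.p_sq]) x hx
  set I := ∫ b, truncDev m (N : NNReal)⁻¹ (truncLevel p q R) b * (b ⬝ᵥ x) ^ 2
        ∂gaussVec m (N : NNReal)⁻¹
  rw [h.coe_inv] at h0
  have hP := h.sqDev_tail
  set P := (gaussVec m (N : NNReal)⁻¹).real {b | truncLevel p q R < |sqDev m (N : NNReal)⁻¹ b|}
  have hP' : P ≤ 2 * R ^ 4 := by
    have e1 : Real.exp (-(4 * q ^ 2)) ≤ Real.exp (-q ^ 2) ^ 2 := by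
      rw [← Real.exp_nat_mul]
      refine Real.exp_le_exp.2 ?_
      push_cast
      nlinarith [sq_nonneg q]
    have e2 : Real.exp (-q ^ 2) ^ 2 ≤ (R ^ 2) ^ 2 := pow_le_pow_left₀ (Real.exp_pos _).le hexp 2
    linarith
  have e : N * I - 2 * (N : ℝ)⁻¹ * (x ⬝ᵥ x) = N * (I - 2 * (R ^ 2) ^ 2 * (x ⬝ᵥ x)) := by
    rw [← h.R_sq]
    linear_combination 2 * R ^ 2 * (x ⬝ᵥ x) * hRN
  rw [e, abs_mul, abs_of_pos hN]
  refine le_trans ?_ h.bias_le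
  calc N * |I - 2 * (R ^ 2) ^ 2 * (x ⬝ᵥ x)|
      ≤ N * (300000 * p ^ 2 * (R ^ 2) ^ 3 + R ^ 2 * (2 * R ^ 4)) := by
        gcongr
        exact h0.trans (by gcongr)
    _ = _ := by linear_combination (300000 * p ^ 2 * R ^ 4 + 2 * R ^ 4) * hRN

theorem quadForm_tail (h : GaussBasisVars N m v p q R s₂ s₄ s₆ κ D)
    (hexp : Real.exp (-q ^ 2) ≤ R ^ 2) {w : Fin (m + 1) → ℝ} (hw : w ⬝ᵥ w = 1) :
    (iidGaussVec N m (N : NNReal)⁻¹).real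
      {B | (∀ i, |sqDev m (N : NNReal)⁻¹ (B i)| ≤ truncLevel p q R) ∧
        |∑ i, v i ^ 2 * sqDev m (N : NNReal)⁻¹ (B i)| ≤ 10000 * etaPoly p q R s₂ s₄ s₆ κ D ∧
        500000 * etaPoly p q R s₂ s₄ s₆ κ D <
          |w ⬝ᵥ (specMat (gaussBasis (n := m + 1) v B)).mulVec w -
            (∑ i, v i ^ 4 - 3 / N) * w 0 ^ 2|} ≤ 8 * Real.exp (-(2 * (p ^ 2 + q ^ 2))) := by
  rw [dotProduct_self_eq_head_add_tail] at hw
  have hN : 0 < N := by exact_mod_cast h.N_pos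
  set x := Fin.tail w with hxdef
  have hx0 : 0 ≤ x ⬝ᵥ x := by
    rw [← eucNorm_sq]
    positivity
  have hx : x ⬝ᵥ x ≤ 1 := by nlinarith [sq_nonneg (w 0)]
  have t2 := h.cubic_tail hx
  have t3 := h.mixed_tail hx
  have t4 := h.quadratic_tail hx
  have t5 := h.quartic_tail hx
  set μ := iidGaussVec N m (N : NNReal)⁻¹
  set A₂ : Set (Fin N → Fin m → ℝ) := {B | 10000 * etaPoly p q R s₂ s₄ s₆ κ D <
      |∑ i, v i ^ 3 * (B i ⬝ᵥ x)|} with hA₂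
  set A₃ : Set (Fin N → Fin m → ℝ) := {B | 10000 * etaPoly p q R s₂ s₄ s₆ κ D <
      |∑ i, v i * (truncDev m (N : NNReal)⁻¹ (truncLevel p q R) (B i) * (B i ⬝ᵥ x))|} with hA₃
  set A₄ : Set (Fin N → Fin m → ℝ) := {B | 10000 * etaPoly p q R s₂ s₄ s₆ κ D <
      |∑ i, v i ^ 2 * ((B i ⬝ᵥ x) ^ 2 - (N : ℝ)⁻¹ * (x ⬝ᵥ x))|} with hA₄
  set I := ∫ b, truncDev m (N : NNReal)⁻¹ (truncLevel p q R) b * (b ⬝ᵥ x) ^ 2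
          ∂gaussVec m (N : NNReal)⁻¹ with hI
  set A₅ : Set (Fin N → Fin m → ℝ) := {B | 10000 * etaPoly p q R s₂ s₄ s₆ κ D <
      |∑ i, (truncDev m (N : NNReal)⁻¹ (truncLevel p q R) (B i) * (B i ⬝ᵥ x) ^ 2 - I)|} with hA₅
  refine (measureReal_mono (μ := μ) (s₂ := A₂ ∪ (A₃ ∪ (A₄ ∪ A₅))) ?_).trans ?_
  · rintro B ⟨hG, h1, hB⟩
    by_contra hcon
    simp only [Set.mem_union, not_or, hA₂, hA₃, hA₄, hA₅, Set.mem_ofPred_eq, not_lt] at hcon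
    obtain ⟨h2, h3, h4, h5⟩ := hcon
    have htr : ∀ i, truncDev m (N : NNReal)⁻¹ (truncLevel p q R) (B i) =
        sqDev m (N : NNReal)⁻¹ (B i) := fun i => if_pos (hG i)
    simp only [htr] at h3 h5
    have hβ := h.abs_bias_le hexp hx
    rw [← hI] at hβ
    refine absurd hB (not_lt.2 ?_)
    have key := h.quadForm_error_le (a := w 0) (y := x ⬝ᵥ x) (by linarith) hx0 hx h.abs_sub_one_le
      h1 h2 h3 h4 h5 hβ
    rw [gaussBasis_quadForm_sub hN, ← hxdef]
    refine le_trans (le_of_eq ?_) key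
    rw [h.R_sq, Finset.sum_sub_distrib, Finset.sum_const, Finset.card_univ, Fintype.card_fin,
      nsmul_eq_mul]
    congr 1
    ring
  · refine (measureReal_union_le _ _).trans ?_
    have u3 := measureReal_union_le (μ := μ) A₃ (A₄ ∪ A₅)
    have u4 := measureReal_union_le (μ := μ) A₄ A₅
    linarith

theorem good_event_compl_le (h : GaussBasisVars N m v p q R s₂ s₄ s₆ κ D) (hmN : m + 1 ≤ N)
    (hN : 14 ≤ N) {δ : ℝ} (hδ0 : 0 < δ) (hδ1 : δ < 1) (hexp : Real.exp (-q ^ 2) = δ * R ^ 2)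
    {s : Finset (Fin (m + 1) → ℝ)} (hcard : s.card ≤ 5 ^ (m + 1)) (hs : ∀ w ∈ s, w ⬝ᵥ w = 1) :
    (iidGaussVec N m (N : NNReal)⁻¹).real
      {B | ∀ w ∈ s, |w ⬝ᵥ (specMat (gaussBasis (n := m + 1) v B)).mulVec w -
            (∑ i, v i ^ 4 - 3 / N) * w 0 ^ 2| ≤ 500000 * etaPoly p q R s₂ s₄ s₆ κ D ∧
          ∑ i, (v i * w 0 + B i ⬝ᵥ Fin.tail w) ^ 2 ≤ (9 * (s₂ + 1)) ^ 2}ᶜ ≤ δ := by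
  have hN0 := h.N_pos
  have hR := h.R_pos
  have hRN : (N : ℝ) * R ^ 2 = 1 := by rw [h.R_sq, mul_inv_cancel₀ hN0.ne']
  have hexp' : Real.exp (-q ^ 2) ≤ R ^ 2 := by
    rw [hexp]
    exact mul_le_of_le_one_left (sq_nonneg R) hδ1.le
  have hrow := h.exists_row_tail
  have hdiag := h.diag_tail
  set μ := iidGaussVec N m (N : NNReal)⁻¹
  set A₀ : Set (Fin N → Fin m → ℝ) :=
    {B | ∃ i, truncLevel p q R < |sqDev m (N : NNReal)⁻¹ (B i)|} with hA₀
  set A₁ : Set (Fin N → Fin m → ℝ) := {B | 10000 * etaPoly p q R s₂ s₄ s₆ κ D <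
      |∑ i, v i ^ 2 * sqDev m (N : NNReal)⁻¹ (B i)|} with hA₁
  set C : (Fin (m + 1) → ℝ) → Set (Fin N → Fin m → ℝ) := fun w =>
      {B | (∀ i, |sqDev m (N : NNReal)⁻¹ (B i)| ≤ truncLevel p q R) ∧
        |∑ i, v i ^ 2 * sqDev m (N : NNReal)⁻¹ (B i)| ≤ 10000 * etaPoly p q R s₂ s₄ s₆ κ D ∧
        500000 * etaPoly p q R s₂ s₄ s₆ κ D <
          |w ⬝ᵥ (specMat (gaussBasis (n := m + 1) v B)).mulVec w -
            (∑ i, v i ^ 4 - 3 / N) * w 0 ^ 2|} with hC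
  set F : (Fin (m + 1) → ℝ) → Set (Fin N → Fin m → ℝ) := fun w =>
      {B | 39 < ∑ i, (B i ⬝ᵥ Fin.tail w) ^ 2} with hF
  have hCF : ∀ w ∈ s, μ.real (C w ∪ F w) ≤ 10 * Real.exp (-(2 * (p ^ 2 + q ^ 2))) := by
    intro w hw
    have hw1 := hs w hw
    have hx : Fin.tail w ⬝ᵥ Fin.tail w ≤ 1 := by
      rw [dotProduct_self_eq_head_add_tail] at hw1
      nlinarith [sq_nonneg (w 0)]
    have h1 : μ.real (C w) ≤ _ := h.quadForm_tail hexp' hw1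
    have h2 : μ.real (F w) ≤ _ := h.sum_sq_tail hmN hx
    have := measureReal_union_le (μ := μ) (C w) (F w)
    linarith
  refine (measureReal_mono (μ := μ) (s₂ := A₀ ∪ (A₁ ∪ ⋃ w ∈ s, (C w ∪ F w))) ?_).trans ?_
  · intro B hB
    by_contra hcon
    simp only [Set.mem_union, Set.mem_iUnion, not_or, not_exists, hA₀, hA₁, hC, hF,
      Set.mem_ofPred_eq, not_lt, not_and] at hcon
    obtain ⟨h0, h1, h2⟩ := hcon
    refine hB fun w hw => ⟨(h2 w hw).1 h0 h1, ?_⟩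
    have h3 := (h2 w hw).2
    have hw1 := hs w hw
    rw [dotProduct_self_eq_head_add_tail] at hw1
    have hx0 : 0 ≤ Fin.tail w ⬝ᵥ Fin.tail w := by
      rw [← eucNorm_sq]
      positivity
    have hs2 := h.s₂_nonneg
    calc ∑ i, (v i * w 0 + B i ⬝ᵥ Fin.tail w) ^ 2
        ≤ ∑ i, (2 * v i ^ 2 + 2 * (B i ⬝ᵥ Fin.tail w) ^ 2) := by
          refine Finset.sum_le_sum fun i _ => ?_
          have : (v i * w 0) ^ 2 ≤ v i ^ 2 := by
            rw [mul_pow]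
            exact mul_le_of_le_one_right (sq_nonneg _) (by linarith)
          nlinarith [sq_nonneg (v i * w 0 - B i ⬝ᵥ Fin.tail w)]
      _ = 2 * s₂ ^ 2 + 2 * ∑ i, (B i ⬝ᵥ Fin.tail w) ^ 2 := by
          rw [Finset.sum_add_distrib, ← Finset.mul_sum, ← Finset.mul_sum, h.s₂_sq]
      _ ≤ _ := by nlinarith
  · have hU : μ.real (⋃ w ∈ s, (C w ∪ F w)) ≤ 10 * Real.exp (-q ^ 2) ^ 2 := by
      refine (measureReal_biUnion_finset_le _ _).trans ?_
      refine (Finset.sum_le_card_nsmul _ _ _ hCF).trans ?_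
      rw [nsmul_eq_mul]
      have hc : (s.card : ℝ) ≤ 5 ^ (m + 1) := by exact_mod_cast hcard
      have h5 : (5 : ℝ) ≤ Real.exp 2 := by
        have := Real.exp_one_gt_d9
        have e : Real.exp 2 = Real.exp 1 * Real.exp 1 := by
          rw [← Real.exp_add]
          norm_num
        rw [e]
        nlinarith
      have h6 : (s.card : ℝ) ≤ Real.exp (2 * p ^ 2) := by
        refine hc.trans ?_
        have e : Real.exp (2 * p ^ 2) = Real.exp 2 ^ (m + 1) := by
          rw [← Real.exp_nat_mul, h.p_sq]
          push_cast
          ring_nf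
        rw [e]
        gcongr
      calc (s.card : ℝ) * (10 * Real.exp (-(2 * (p ^ 2 + q ^ 2))))
          ≤ Real.exp (2 * p ^ 2) * (10 * Real.exp (-(2 * (p ^ 2 + q ^ 2)))) := by gcongr
        _ = 10 * (Real.exp (2 * p ^ 2) * Real.exp (-(2 * (p ^ 2 + q ^ 2)))) := by ring
        _ = 10 * Real.exp (-q ^ 2) ^ 2 := by
          rw [← Real.exp_add, ← Real.exp_nat_mul]
          push_cast
          ring_nf
    have e4 : Real.exp (-(4 * q ^ 2)) = Real.exp (-q ^ 2) ^ 4 := by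
      rw [← Real.exp_nat_mul]
      push_cast
      ring_nf
    have e2 : Real.exp (-(2 * q ^ 2)) = Real.exp (-q ^ 2) ^ 2 := by
      rw [← Real.exp_nat_mul]
      push_cast
      ring_nf
    rw [e4] at hrow
    rw [e2] at hdiag
    have u0 := measureReal_union_le (μ := μ) A₀ (A₁ ∪ ⋃ w ∈ s, (C w ∪ F w))
    have u1 := measureReal_union_le (μ := μ) A₁ (⋃ w ∈ s, (C w ∪ F w))
    have hR1 : 14 * R ^ 2 ≤ 1 := by
      have : (14 : ℝ) ≤ N := by exact_mod_cast hN
      nlinarith [sq_nonneg R]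
    rw [hexp] at hrow hdiag hU
    have hd2 : δ ^ 2 ≤ δ := by nlinarith
    have hd4 : δ ^ 4 ≤ δ := by nlinarith [sq_nonneg δ]
    have f1 : N * (2 * (δ * R ^ 2) ^ 4) ≤ 2 * δ * R ^ 2 := by
      have : N * (2 * (δ * R ^ 2) ^ 4) = 2 * δ ^ 4 * R ^ 6 := by
        linear_combination 2 * δ ^ 4 * R ^ 6 * hRN
      rw [this]
      have : R ^ 6 ≤ R ^ 2 := by
        have : R ^ 4 ≤ 1 := by nlinarith [sq_nonneg R]
        nlinarith [sq_nonneg R]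
      gcongr
    have f2 : (δ * R ^ 2) ^ 2 ≤ δ * R ^ 2 := by
      have : δ * R ^ 2 ≤ 1 := by nlinarith [sq_nonneg R]
      nlinarith [mul_nonneg hδ0.le (sq_nonneg R)]
    nlinarith

end GaussBasisVars

theorem lpNorm_pow_eq {N k : ℕ} (hk : 0 < k) (v : Fin N → ℝ) :
    lpNorm k v ^ k = ∑ i, |v i| ^ k := by
  have h0 : 0 ≤ ∑ i, |v i| ^ (k : ℝ) := Finset.sum_nonneg fun i _ => by positivity
  unfold _root_.lpNorm
  rw [← Real.rpow_natCast, ← Real.rpow_mul h0, one_div_mul_cancel (by positivity),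
    Real.rpow_one]
  simp only [Real.rpow_natCast]

theorem lpNorm_four_pow (N : ℕ) (v : Fin N → ℝ) : lpNorm 4 v ^ 4 = ∑ i, v i ^ 4 := by
  have := lpNorm_pow_eq (k := 4) (by norm_num) v
  push_cast at this
  rw [this]
  exact Finset.sum_congr rfl fun i _ => Even.pow_abs (by decide) _

theorem lpNorm_six_pow (N : ℕ) (v : Fin N → ℝ) : lpNorm 6 v ^ 6 = ∑ i, v i ^ 6 := by
  have := lpNorm_pow_eq (k := 6) (by norm_num) v
  push_cast at this
  rw [this]
  exact Finset.sum_congr rfl fun i _ => Even.pow_abs (by decide) _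

theorem lpNorm_nonneg {N : ℕ} (k : ℝ) (v : Fin N → ℝ) : 0 ≤ lpNorm k v :=
  Real.rpow_nonneg (Finset.sum_nonneg fun _ _ => Real.rpow_nonneg (abs_nonneg _) _) _

theorem Real.rpow_three_halves {x : ℝ} (hx : 0 ≤ x) : x ^ ((3 : ℝ) / 2) = √x ^ 3 := by
  rw [Real.sqrt_eq_rpow, ← Real.rpow_natCast, ← Real.rpow_mul hx]
  norm_num

theorem abs_le_supNorm {N : ℕ} (v : Fin N → ℝ) (i : Fin N) : |v i| ≤ supNorm v :=
  le_ciSup (f := fun i => |v i|) (Set.finite_range _).bddAbove i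

theorem etaBound_one_eq {N n : ℕ} (hN : 0 < N) (v : Fin N → ℝ) {δ : ℝ}
    (hL : 0 ≤ Real.log (N / δ)) :
    etaBound 1 N n v δ = etaPoly (√n) (√(Real.log (N / δ))) (√N)⁻¹ (eucNorm v) (lpNorm 4 v ^ 2)
      (lpNorm 6 v ^ 3) (supNorm v) |eucNorm v ^ 2 - 1| := by
  have hN' : (0 : ℝ) < N := by exact_mod_cast hN
  have hn : (0 : ℝ) ≤ n := Nat.cast_nonneg n
  rw [etaBound, Real.rpow_three_halves hN'.le, Real.rpow_three_halves (mul_nonneg hn hL),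
    Real.sqrt_mul hn, etaPoly]
  set L := Real.log (N / δ)
  have e1 : √(N : ℝ) ^ 2 = N := Real.sq_sqrt hN'.le
  have e2 : √(n : ℝ) ^ 2 = n := Real.sq_sqrt hn
  have e3 : √L ^ 2 = L := Real.sq_sqrt hL
  have hpos : 0 < √(N : ℝ) := Real.sqrt_pos.2 hN'
  generalize √(N : ℝ) = a at *
  generalize √(n : ℝ) = b at *
  generalize √L = c at *
  rw [← e1, ← e2, ← e3]
  field_simp

theorem gaussBasisVars_of_log_pow_le {N m : ℕ} (v : Fin N → ℝ) {L : ℝ} (hN : 0 < N) (hL : 1 ≤ L)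
    (hLN : L ^ 7 ≤ N) :
    GaussBasisVars N m v (√((m + 1 : ℕ) : ℝ)) (√L) (√N)⁻¹ (eucNorm v) (lpNorm 4 v ^ 2)
      (lpNorm 6 v ^ 3) (supNorm v) |eucNorm v ^ 2 - 1| := by
  have hN' : (0 : ℝ) < N := by exact_mod_cast hN
  have hpos : 0 < √(N : ℝ) := Real.sqrt_pos.2 hN'
  have h2 : eucNorm v ^ 2 = ∑ i, v i ^ 2 := by
    rw [eucNorm_sq, dotProduct]
    exact Finset.sum_congr rfl fun i _ => by ring
  refine ⟨⟨?_, ?_, ?_, ?_, eucNorm_nonneg v, sq_nonneg _, ?_, ?_, abs_nonneg _⟩, ?_, ?_, h2, ?_, ?_,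
    abs_le_supNorm v, ?_⟩
  · rw [Real.one_le_sqrt]
    push_cast
    linarith [(Nat.cast_nonneg m : (0 : ℝ) ≤ m)]
  · exact Real.one_le_sqrt.2 hL
  · positivity
  · rw [← div_eq_mul_inv, div_le_one hpos]
    refine abs_le_of_sq_le_sq' ?_ hpos.le |>.2
    rw [Real.sq_sqrt hN'.le, ← pow_mul, mul_comm, pow_mul, Real.sq_sqrt (by linarith)]
    exact (pow_le_pow_right₀ hL (by norm_num)).trans hLN
  · exact pow_nonneg (lpNorm_nonneg 6 v) 3
  · exact Real.iSup_nonneg fun i => abs_nonneg _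
  · rw [Real.sq_sqrt (by positivity)]
    push_cast
    rfl
  · rw [inv_pow, Real.sq_sqrt hN'.le]
  · rw [← lpNorm_four_pow]
    ring
  · rw [← lpNorm_six_pow]
    ring
  · rw [h2]

/-- Theorem on ℓ₂ estimation from a Gaussian basis: in the Gaussian-basis
model `Ỹ = YQ`, with `M̃` the spectral matrix of `Ỹ` and `ũ` its unit leading eigenvector,
there are a universal constant `C₀ > 0` (defining `η`), a universal constant `C > 0` and an
absolute constant `N₀` such that for any `δ ∈ (0,1)` with `N ≥ log⁷(N/δ)`, with probability
at least `1 - δ`, up to a sign `s ∈ {±1}`,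
`|‖v‖₄⁴ - 3/N| · ‖s Ỹũ - v‖ ≤ C η (‖v‖ + 1)`. -/
theorem stmt_6 :
    ∃ C₀ : ℝ, 0 < C₀ ∧ ∃ C : ℝ, 0 < C ∧ ∃ N₀ : ℕ,
      ∀ (N n : ℕ) (v : Fin N → ℝ) (δ : ℝ), N₀ ≤ N → 1 ≤ n → n ≤ N → 0 < δ → δ < 1 →
        (Real.log (N / δ)) ^ 7 ≤ N →
        ∀ Q : Matrix (Fin n) (Fin n) ℝ, Qᵀ * Q = 1 →
        ENNReal.ofReal (1 - δ) ≤
          (iidGaussVec N (n - 1) ((N : NNReal))⁻¹)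
            {B | ∀ u : Fin n → ℝ, IsLeadingEigen (specMat (gaussBasis v B * Q)) u →
              ∃ s : ℝ, (s = 1 ∨ s = -1) ∧
                |lpNorm 4 v ^ 4 - 3 / N|
                    * eucNorm (s • (gaussBasis v B * Q).mulVec u - v)
                  ≤ C * etaBound C₀ N n v δ * (eucNorm v + 1)} := by
  refine ⟨1, one_pos, 144000000, by norm_num, 14, ?_⟩
  intro N n v δ hN hn hnN hδ0 hδ1 hlog Q hQ
  obtain ⟨m, rfl⟩ : ∃ m, n = m + 1 := ⟨n - 1, by omega⟩
  have hNpos : 0 < N := by omega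
  have hN' : (14 : ℝ) ≤ N := by exact_mod_cast hN
  have hratio : (N : ℝ) ≤ N / δ := le_div_self (by positivity) hδ0 hδ1.le
  have hL : 1 ≤ Real.log (N / δ) := by
    rw [Real.le_log_iff_exp_le (by positivity)]
    linarith [Real.exp_one_lt_d9]
  have hvars := gaussBasisVars_of_log_pow_le (m := m) v hNpos hL hlog
  have hexp : Real.exp (-√(Real.log (N / δ)) ^ 2) = δ * (√(N : ℝ))⁻¹ ^ 2 := by
    rw [Real.sq_sqrt (by linarith), Real.exp_neg, Real.exp_log (by positivity), inv_pow,
      Real.sq_sqrt (by positivity), inv_div, div_eq_mul_inv]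
  obtain ⟨s, hcard, hs, hnet⟩ := exists_half_net (m + 1)
  have hgood := hvars.good_event_compl_le hnN hN hδ0 hδ1 hexp hcard hs
  rw [← etaBound_one_eq hNpos v (by linarith)] at hgood
  set μ : Measure (Fin N → Fin m → ℝ) := iidGaussVec N m (N : NNReal)⁻¹
  have hsubset : ∀ (S T : Set (Fin N → Fin m → ℝ)), S ⊆ T → μ.real Sᶜ ≤ δ →
      ENNReal.ofReal (1 - δ) ≤ μ T := by
    intro S T hST hS
    have h1 : 1 ≤ μ.real S + μ.real Sᶜ := by
      have := measureReal_union_le (μ := μ) S Sᶜ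
      rwa [Set.union_compl_self, probReal_univ] at this
    refine le_trans ?_ (measure_mono hST)
    rw [← ofReal_measureReal]
    exact ENNReal.ofReal_le_ofReal (by linarith)
  refine hsubset _ _ ?_ hgood
  intro B hB u hu
  obtain ⟨σ, hσ, hle⟩ := eucNorm_mulVec_sub_le v B Q hQ s hs hnet (fun w hw => (hB w hw).1)
    (by have := eucNorm_nonneg v; positivity) (fun w hw => (hB w hw).2) u hu
  refine ⟨σ, hσ, ?_⟩
  rw [lpNorm_four_pow]
  refine hle.trans (le_of_eq ?_)
  ring
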